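/- arXiv:2010.06153 — 7 statements merged into one kernel-verified Lean document; each statement's English description precedes it below -/
import Mathlib

section
/- Let θ ∈ ℝ, α > 0, b > 0, c ≥ 0 with θ²·c < b², and set β = √(θ²(1+α²) + b²). Then for every s ≥ α, the derivative of the phase function φ(s) = β·√(1 + c + s²) + αθs is strictly positive: φ′(s) = β·s/√(1 + c + s²) + αθ > 0. Consequently φ is strictly increasing on [α, ∞). -/
/-!
Since `s ↦ s / √(1 + c + s²)` is nondecreasing, so is `φ'`, and only the endpoint `s = α` matters.
There `φ'(α) = α (β / √(1 + c + α²) + θ)`, which is positive as soon as `|θ| √(1 + c + α²) < β`.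
By the choice of `β`, squaring turns this inequality into `θ² c < b²`.
-/

open Set

lemma hasDerivAt_sqrt_add_sq {k s : ℝ} (h : k + s ^ 2 ≠ 0) :
    HasDerivAt (fun x => √(k + x ^ 2)) (s / √(k + s ^ 2)) s := by
  have h_radicand : HasDerivAt (fun x : ℝ => k + x ^ 2) (2 * s) s := by
    simpa using (hasDerivAt_pow 2 s).const_add k
  simpa only [mul_div_mul_left _ _ (two_ne_zero' ℝ)] using h_radicand.sqrt h

lemma monotone_div_sqrt_add_sq {k : ℝ} (hk : 0 ≤ k) :
    Monotone fun s : ℝ => s / √(k + s ^ 2) := by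
  refine monotone_of_odd_of_monotoneOn_nonneg (fun s => by simp only [neg_sq, neg_div]) ?_
  intro s (hs : 0 ≤ s) t (ht : 0 ≤ t) hst
  obtain rfl | hs_pos := hs.eq_or_lt
  · simpa only [zero_div] using div_nonneg ht (Real.sqrt_nonneg _)
  have ht_pos : 0 < t := hs_pos.trans_le hst
  have h_sq : s ^ 2 * (k + t ^ 2) ≤ t ^ 2 * (k + s ^ 2) := by
    have : s ^ 2 * k ≤ t ^ 2 * k := by gcongr
    linarith
  rw [div_le_div_iff₀ (by positivity) (by positivity)]
  calc s * √(k + t ^ 2) = √(s ^ 2 * (k + t ^ 2)) := by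
        rw [Real.sqrt_mul (sq_nonneg s), Real.sqrt_sq hs]
    _ ≤ √(t ^ 2 * (k + s ^ 2)) := Real.sqrt_le_sqrt h_sq
    _ = t * √(k + s ^ 2) := by rw [Real.sqrt_mul (sq_nonneg t), Real.sqrt_sq ht]

lemma mul_div_add_mul_pos_of_abs_mul_lt {α β θ r : ℝ} (hα : 0 < α) (hr : 0 < r)
    (h : |θ| * r < β) : 0 < β * α / r + α * θ := by
  have h_slope : -θ < β / r := (neg_le_abs θ).trans_lt ((lt_div_iff₀ hr).2 h)
  calc 0 < α * (β / r + θ) := mul_pos hα (by linarith)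
    _ = β * α / r + α * θ := by ring

theorem stmt_2_general {θ α β k : ℝ} (hα : 0 < α) (hk : 0 ≤ k) (hβ : |θ| * √(k + α ^ 2) < β) :
    (∀ s, α ≤ s →
        HasDerivAt (fun s => β * √(k + s ^ 2) + α * θ * s)
            (β * s / √(k + s ^ 2) + α * θ) s ∧
          0 < β * s / √(k + s ^ 2) + α * θ) ∧
      StrictMonoOn (fun s => β * √(k + s ^ 2) + α * θ * s) (Ici α) := by
  have hβ_nonneg : 0 ≤ β := le_trans (by positivity) hβ.le
  have h_deriv (s : ℝ) (hs : α ≤ s) : HasDerivAt (fun s => β * √(k + s ^ 2) + α * θ * s)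
      (β * s / √(k + s ^ 2) + α * θ) s := by
    have hs_pos : 0 < s := hα.trans_le hs
    simpa only [mul_div_assoc, mul_one] using
      ((hasDerivAt_sqrt_add_sq (by positivity)).const_mul β).fun_add
        ((hasDerivAt_id' s).const_mul (α * θ))
  have h_pos (s : ℝ) (hs : α ≤ s) : 0 < β * s / √(k + s ^ 2) + α * θ :=
    calc 0 < β * α / √(k + α ^ 2) + α * θ :=
          mul_div_add_mul_pos_of_abs_mul_lt hα (by positivity) hβ
      _ ≤ β * s / √(k + s ^ 2) + α * θ := by
          simp only [mul_div_assoc]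
          gcongr ?_ + _
          exact mul_le_mul_of_nonneg_left (monotone_div_sqrt_add_sq hk hs) hβ_nonneg
  refine ⟨fun s hs => ⟨h_deriv s hs, h_pos s hs⟩, ?_⟩
  exact strictMonoOn_of_hasDerivWithinAt_pos (convex_Ici α)
    (fun s hs => (h_deriv s hs).continuousAt.continuousWithinAt)
    (fun s hs => (h_deriv s (interior_subset hs)).hasDerivWithinAt)
    (fun s hs => h_pos s (interior_subset hs))

/-- The phase function φ(s) = β·√(1 + c + s²) + αθs, with β = √(θ²(1+α²) + b²),
has strictly positive derivative φ′(s) = β·s/√(1 + c + s²) + αθ at every s ≥ α,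
and consequently φ is strictly increasing on [α, ∞). Here c plays the role of a²/x²
and the hypothesis θ²c < b² corresponds to |x| > |θa|/b. -/
theorem stmt_2 (θ α b c : ℝ) (hα : 0 < α) (hb : 0 < b) (hc : 0 ≤ c)
    (hcb : θ ^ 2 * c < b ^ 2)
    (β : ℝ) (hβ : β = Real.sqrt (θ ^ 2 * (1 + α ^ 2) + b ^ 2))
    (φ : ℝ → ℝ) (hφ : ∀ s, φ s = β * Real.sqrt (1 + c + s ^ 2) + α * θ * s) :
    (∀ s, α ≤ s →
        HasDerivAt φ (β * s / Real.sqrt (1 + c + s ^ 2) + α * θ) s ∧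
          0 < β * s / Real.sqrt (1 + c + s ^ 2) + α * θ) ∧
      StrictMonoOn φ (Set.Ici α) := by
  obtain rfl : φ = _ := funext hφ
  refine stmt_2_general hα (by linarith) ?_
  rw [hβ, ← Real.sqrt_sq_eq_abs, ← Real.sqrt_mul (sq_nonneg θ)]
  exact Real.sqrt_lt_sqrt (by positivity) (by linarith)
end

section
/- Let r ∈ ℝ and q > 0. Then for every s > 0, |∫_s^∞ y^{r−1}·e^{−qy} dy − (1/q)·s^{r−1}·e^{−qs}| ≤ (|r−1|/(q·s))·∫_s^∞ y^{r−1}·e^{−qy} dy. -/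
open MeasureTheory Real Set

theorem integrableOn_rpow_mul_exp_neg_mul_Ioi (p : ℝ) {q s : ℝ} (hq : 0 < q) (hs : 0 < s) :
    IntegrableOn (fun y : ℝ ↦ y ^ p * Real.exp (-q * y)) (Ioi s) := by
  refine integrable_of_isBigO_exp_neg (half_pos hq) ?_ ?_
  · exact (continuousOn_id.rpow_const fun y hy ↦ Or.inl (hs.trans_le hy).ne').mul (by fun_prop)
  · -- Half of the exponential decay absorbs the power.
    refine ((isLittleO_rpow_exp_pos_mul_atTop p (half_pos hq)).isBigO.mul
      (Asymptotics.isBigO_refl (fun y ↦ Real.exp (-q * y)) Filter.atTop)).congr_right fun y ↦ ?_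
    rw [← Real.exp_add]
    ring_nf

theorem hasDerivAt_rpow_mul_exp_neg_mul (p q : ℝ) {y : ℝ} (hy : y ≠ 0) :
    HasDerivAt (fun y : ℝ ↦ y ^ p * Real.exp (-q * y))
      (p * (y ^ (p - 1) * Real.exp (-q * y)) - q * (y ^ p * Real.exp (-q * y))) y := by
  have hpow := Real.hasDerivAt_rpow_const (p := p) (Or.inl hy)
  have hexp := (hasDerivAt_const_mul (x := y) (-q)).exp
  exact (hpow.mul hexp).congr_deriv (by ring)

theorem integral_Ioi_rpow_mul_exp_neg_mul_eq (p : ℝ) {q s : ℝ} (hq : 0 < q) (hs : 0 < s) :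
    ∫ y in Ioi s, y ^ p * Real.exp (-q * y) =
      1 / q * s ^ p * Real.exp (-q * s) +
        p / q * ∫ y in Ioi s, y ^ (p - 1) * Real.exp (-q * y) := by
  have hint := (integrableOn_rpow_mul_exp_neg_mul_Ioi p hq hs).const_mul q
  have hint' := (integrableOn_rpow_mul_exp_neg_mul_Ioi (p - 1) hq hs).const_mul p
  have hftc := integral_Ioi_of_hasDerivAt_of_tendsto'
    (fun y hy ↦ hasDerivAt_rpow_mul_exp_neg_mul p q (hs.trans_le hy).ne') (hint'.sub hint)
    (tendsto_rpow_mul_exp_neg_mul_atTop_nhds_zero p q hq)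
  rw [integral_sub hint' hint, integral_const_mul, integral_const_mul] at hftc
  simp only [neg_mul] at hftc ⊢
  field_simp
  linarith

theorem setIntegral_Ioi_inv_mul_le {μ : Measure ℝ} {f : ℝ → ℝ} {s : ℝ} (hs : 0 < s)
    (hf : IntegrableOn f (Ioi s) μ) (hf_nonneg : ∀ y ∈ Ioi s, 0 ≤ f y) :
    ∫ y in Ioi s, y⁻¹ * f y ∂μ ≤ s⁻¹ * ∫ y in Ioi s, f y ∂μ := by
  rw [← integral_const_mul]
  refine integral_mono_of_nonneg ?_ (hf.const_mul s⁻¹) ?_ <;>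
    refine ae_restrict_of_forall_mem measurableSet_Ioi fun y hy ↦ ?_
  · exact mul_nonneg (inv_nonneg.2 (hs.trans hy).le) (hf_nonneg y hy)
  · exact mul_le_mul_of_nonneg_right (inv_anti₀ hs (mem_Ioi.1 hy).le) (hf_nonneg y hy)

theorem integral_Ioi_rpow_sub_one_mul_exp_neg_mul_le (p : ℝ) {q s : ℝ} (hq : 0 < q)
    (hs : 0 < s) :
    ∫ y in Ioi s, y ^ (p - 1) * Real.exp (-q * y) ≤
      s⁻¹ * ∫ y in Ioi s, y ^ p * Real.exp (-q * y) := by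
  calc ∫ y in Ioi s, y ^ (p - 1) * Real.exp (-q * y)
      = ∫ y in Ioi s, y⁻¹ * (y ^ p * Real.exp (-q * y)) :=
        setIntegral_congr_fun measurableSet_Ioi fun y hy ↦ by
          simp only [Real.rpow_sub_one (hs.trans hy).ne', div_eq_inv_mul, mul_assoc]
    _ ≤ s⁻¹ * ∫ y in Ioi s, y ^ p * Real.exp (-q * y) :=
        setIntegral_Ioi_inv_mul_le hs (integrableOn_rpow_mul_exp_neg_mul_Ioi p hq hs)
          fun y hy ↦ mul_nonneg (Real.rpow_nonneg (hs.trans hy).le p) (Real.exp_nonneg _)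

/-- Relative-error bound for the incomplete-gamma-type integral: for any r ∈ ℝ, q > 0
and s > 0,
|∫_s^∞ y^{r−1}e^{−qy} dy − (1/q)s^{r−1}e^{−qs}| ≤ (|r−1|/(qs))·∫_s^∞ y^{r−1}e^{−qy} dy. -/
theorem stmt_8 (r q : ℝ) (hq : 0 < q) :
    ∀ s : ℝ, 0 < s →
      |(∫ y in Ioi s, y ^ (r - 1) * Real.exp (-q * y)) -
          (1 / q) * s ^ (r - 1) * Real.exp (-q * s)| ≤
        (|r - 1| / (q * s)) * ∫ y in Ioi s, y ^ (r - 1) * Real.exp (-q * y) := by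
  intro s hs
  set I := ∫ y in Ioi s, y ^ (r - 1) * Real.exp (-q * y)
  set J := ∫ y in Ioi s, y ^ (r - 1 - 1) * Real.exp (-q * y)
  have hparts : I = 1 / q * s ^ (r - 1) * Real.exp (-q * s) + (r - 1) / q * J :=
    integral_Ioi_rpow_mul_exp_neg_mul_eq (r - 1) hq hs
  have hJ_nonneg : 0 ≤ J := setIntegral_nonneg measurableSet_Ioi fun y hy ↦
    mul_nonneg (Real.rpow_nonneg (hs.trans hy).le _) (Real.exp_nonneg _)
  have hJ_le : J ≤ s⁻¹ * I := integral_Ioi_rpow_sub_one_mul_exp_neg_mul_le (r - 1) hq hs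
  calc |I - 1 / q * s ^ (r - 1) * Real.exp (-q * s)|
      = |(r - 1) / q * J| := by rw [sub_eq_of_eq_add' hparts]
    _ = |r - 1| / q * J := by rw [abs_mul, abs_div, abs_of_pos hq, abs_of_nonneg hJ_nonneg]
    _ ≤ |r - 1| / q * (s⁻¹ * I) := by gcongr
    _ = |r - 1| / (q * s) * I := by field_simp
end

section
/- Let p ∈ ℝ, θ ∈ ℝ, α > 0, b > 0, and set β = √(θ²(1+α²) + b²), γ = β + θ·√(1+α²), φ(s) = β·√(1+s²) + αθ·s (so φ(α) = β·√(1+α²) + α²θ). Then as v → ∞, ∫_α^∞ (1+s²)^{(p−3/2)/2}·e^{−v·φ(s)} ds = [(1+α²)^{(2p−1)/4}/(α·γ)]·v^{−1}·e^{−v·φ(α)}·(1 + O(1/v)); that is, there exist M > 0 and v₀ > 0 such that for all v ≥ v₀, the ratio of the left side to (1+α²)^{(2p−1)/4}/(αγ)·v^{−1}e^{−vφ(α)} differs from 1 by at most M/v. -/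
open MeasureTheory Real Set

open Filter Topology Asymptotics

/-!
The measure `φ' s * exp (-v * φ s) ds` has an explicit primitive, so its mass on `(α, ∞)` is exactly
`v⁻¹ * exp (-v * φ α)`. Replacing the amplitude `f` by the multiple of `φ'` that agrees with it at
`α` costs a remainder vanishing at `α`; as `φ` grows at least linearly, that remainder is dominated
by a Gamma integral of order `v⁻²`.
-/

section RelativeError

lemma isBigO_div_sub_one {ι : Type*} {l : Filter ι} {u w r : ι → ℝ} (hw : ∀ᶠ i in l, w i ≠ 0)
    (h : (fun i ↦ u i - w i) =O[l] fun i ↦ r i * w i) :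
    (fun i ↦ u i / w i - 1) =O[l] r :=
  (h.mul (isBigO_refl (fun i ↦ (w i)⁻¹) l)).congr'
    (hw.mono fun i hi ↦ by simp only [← div_eq_mul_inv, sub_div, div_self hi])
    (hw.mono fun i hi ↦ mul_inv_cancel_right₀ hi (r i))

lemma exists_abs_le_div_of_isBigO_inv {F : ℝ → ℝ} (h : F =O[atTop] fun v ↦ v⁻¹) :
    ∃ M > (0 : ℝ), ∃ v₀ > (0 : ℝ), ∀ v, v₀ ≤ v → |F v| ≤ M / v := by
  obtain ⟨M, M_pos, hM⟩ := h.exists_pos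
  obtain ⟨v₀, hv₀, v₀_pos⟩ :=
    ((eventually_forall_ge_atTop.2 hM.bound).and (eventually_gt_atTop 0)).exists
  refine ⟨M, M_pos, v₀, v₀_pos, fun v hv ↦ ?_⟩
  simpa [abs_of_pos (v₀_pos.trans_le hv), div_eq_mul_inv] using hv₀ v hv

end RelativeError

section ExponentialIntegral

variable {r : ℝ}

lemma integral_sub_mul_exp_neg_mul_sub_Ioi (hr : 0 < r) (a : ℝ) :
    ∫ s in Ioi a, (s - a) * exp (-(r * (s - a))) = (r ^ 2)⁻¹ := by
  have shift := (measurePreserving_sub_right volume a).setIntegral_preimage_emb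
    (measurableEmbedding_subRight a) (fun t : ℝ ↦ t * exp (-(r * t))) (Ioi 0)
  have gamma_two := integral_rpow_mul_exp_neg_mul_Ioi (a := 2) two_pos hr
  norm_num [Gamma_two] at shift gamma_two
  rw [shift, gamma_two]

lemma integrableOn_sub_mul_exp_neg_mul_sub_Ioi (hr : 0 < r) (a : ℝ) :
    IntegrableOn (fun s ↦ (s - a) * exp (-(r * (s - a)))) (Ioi a) :=
  .of_integral_ne_zero <| by
    rw [integral_sub_mul_exp_neg_mul_sub_Ioi hr]
    positivity

end ExponentialIntegral

section LaplaceEndpoint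

variable {φ φ' : ℝ → ℝ} {α c v : ℝ}

lemma add_mul_sub_le_of_le_hasDerivAt (hφ : ∀ s ∈ Ici α, HasDerivAt φ (φ' s) s)
    (hc : ∀ s ∈ Ioi α, c ≤ φ' s) {s : ℝ} (hs : α ≤ s) : φ α + c * (s - α) ≤ φ s := by
  have increment : c * (s - α) ≤ φ s - φ α := by
    refine (convex_Ici α).mul_sub_le_image_sub_of_le_deriv (C := c)
      (fun x hx ↦ (hφ x hx).continuousAt.continuousWithinAt) ?_ ?_ α self_mem_Ici s hs hs
    all_goals rw [interior_Ici]
    · exact fun x hx ↦ (hφ x (Ioi_subset_Ici_self hx)).differentiableAt.differentiableWithinAt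
    · exact fun x hx ↦ (hφ x (Ioi_subset_Ici_self hx)).deriv ▸ hc x hx
  linarith

lemma tendsto_atTop_of_le_hasDerivAt (hφ : ∀ s ∈ Ici α, HasDerivAt φ (φ' s) s) (hc₀ : 0 < c)
    (hc : ∀ s ∈ Ioi α, c ≤ φ' s) : Tendsto φ atTop atTop := by
  have tendsto_line : Tendsto (fun s ↦ φ α + c * (s - α)) atTop atTop :=
    tendsto_atTop_add_const_left _ _
      ((tendsto_atTop_add_const_right _ (-α) tendsto_id).const_mul_atTop hc₀)
  refine tendsto_atTop_mono' _ ?_ tendsto_line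
  filter_upwards [eventually_ge_atTop α] with s hs using add_mul_sub_le_of_le_hasDerivAt hφ hc hs

lemma hasDerivAt_neg_inv_mul_exp_neg_mul {s d : ℝ} (hφ : HasDerivAt φ d s) (hv : v ≠ 0) :
    HasDerivAt (fun s ↦ -(v⁻¹ * exp (-v * φ s))) (exp (-v * φ s) * d) s := by
  refine ((hφ.const_mul (-v)).exp.const_mul v⁻¹).neg.congr_deriv ?_
  field_simp

lemma tendsto_neg_inv_mul_exp_neg_mul (hφ : Tendsto φ atTop atTop) (hv : 0 < v) :
    Tendsto (fun s ↦ -(v⁻¹ * exp (-v * φ s))) atTop (𝓝 0) := by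
  have tendsto_exp : Tendsto (fun s ↦ exp (-v * φ s)) atTop (𝓝 0) :=
    tendsto_exp_atBot.comp (hφ.const_mul_atTop_of_neg (neg_neg_of_pos hv))
  simpa using (tendsto_exp.const_mul v⁻¹).neg

lemma integrableOn_exp_neg_mul_mul_deriv_Ioi (hφ : ∀ s ∈ Ici α, HasDerivAt φ (φ' s) s)
    (hφ' : ∀ s ∈ Ioi α, 0 ≤ φ' s) (hlim : Tendsto φ atTop atTop) (hv : 0 < v) :
    IntegrableOn (fun s ↦ exp (-v * φ s) * φ' s) (Ioi α) :=
  integrableOn_Ioi_deriv_of_nonneg'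
    (fun s hs ↦ hasDerivAt_neg_inv_mul_exp_neg_mul (hφ s hs) hv.ne')
    (fun s hs ↦ mul_nonneg (exp_pos _).le (hφ' s hs)) (tendsto_neg_inv_mul_exp_neg_mul hlim hv)

lemma integral_exp_neg_mul_mul_deriv_Ioi (hφ : ∀ s ∈ Ici α, HasDerivAt φ (φ' s) s)
    (hφ' : ∀ s ∈ Ioi α, 0 ≤ φ' s) (hlim : Tendsto φ atTop atTop) (hv : 0 < v) :
    ∫ s in Ioi α, exp (-v * φ s) * φ' s = v⁻¹ * exp (-v * φ α) := by
  rw [integral_Ioi_of_hasDerivAt_of_nonneg'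
    (fun s hs ↦ hasDerivAt_neg_inv_mul_exp_neg_mul (hφ s hs) hv.ne')
    (fun s hs ↦ mul_nonneg (exp_pos _).le (hφ' s hs)) (tendsto_neg_inv_mul_exp_neg_mul hlim hv),
    zero_sub, neg_neg]

variable {E : Type*} [NormedAddCommGroup E] [NormedSpace ℝ E] {f : ℝ → E} {g : E} {K L : ℝ}

lemma norm_exp_neg_mul_smul_le {s : ℝ} {x : E} (hv : 0 ≤ v) (hφ : φ α + c * (s - α) ≤ φ s)
    (hx : ‖x‖ ≤ L * ((s - α) * exp (K * (s - α)))) :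
    ‖exp (-v * φ s) • x‖ ≤
      L * exp (-v * φ α) * ((s - α) * exp (-((v * c - K) * (s - α)))) := by
  have exp_le : exp (-v * φ s) ≤ exp (-v * φ α) * exp (-(v * c * (s - α))) := by
    rw [← exp_add, exp_le_exp]
    linarith [mul_le_mul_of_nonneg_left hφ hv]
  calc ‖exp (-v * φ s) • x‖
      = exp (-v * φ s) * ‖x‖ := by rw [norm_smul, norm_of_nonneg (exp_pos _).le]
    _ ≤ exp (-v * φ α) * exp (-(v * c * (s - α))) * (L * ((s - α) * exp (K * (s - α)))) := by
        gcongr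
    _ = L * exp (-v * φ α) *
          ((s - α) * (exp (-(v * c * (s - α))) * exp (K * (s - α)))) := by ring
    _ = L * exp (-v * φ α) * ((s - α) * exp (-((v * c - K) * (s - α)))) := by
        rw [← exp_add]
        ring_nf

variable [CompleteSpace E]

theorem norm_integral_exp_neg_mul_smul_sub_le
    (hφ : ∀ s ∈ Ici α, HasDerivAt φ (φ' s) s) (hc₀ : 0 < c) (hc : ∀ s ∈ Ioi α, c ≤ φ' s)
    (hf : AEStronglyMeasurable f (volume.restrict (Ioi α)))
    (hfg : ∀ s ∈ Ioi α, ‖f s - φ' s • g‖ ≤ L * ((s - α) * exp (K * (s - α))))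
    (hv : 0 < v) (hK : K < v * c) :
    ‖(∫ s in Ioi α, exp (-v * φ s) • f s) - (v⁻¹ * exp (-v * φ α)) • g‖ ≤
      L * exp (-v * φ α) * ((v * c - K) ^ 2)⁻¹ := by
  have hr : 0 < v * c - K := sub_pos.2 hK
  have φ'_nonneg : ∀ s ∈ Ioi α, 0 ≤ φ' s := fun s hs ↦ hc₀.le.trans (hc s hs)
  have φ_tendsto := tendsto_atTop_of_le_hasDerivAt hφ hc₀ hc
  have main_integrable : IntegrableOn (fun s ↦ (exp (-v * φ s) * φ' s) • g) (Ioi α) :=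
    (integrableOn_exp_neg_mul_mul_deriv_Ioi hφ φ'_nonneg φ_tendsto hv).smul_const g
  have main_integral : ∫ s in Ioi α, (exp (-v * φ s) * φ' s) • g =
      (v⁻¹ * exp (-v * φ α)) • g := by
    rw [integral_smul_const, integral_exp_neg_mul_mul_deriv_Ioi hφ φ'_nonneg φ_tendsto hv]
  have φ_continuousOn : ContinuousOn φ (Ioi α) :=
    fun s hs ↦ (hφ s hs.out.le).continuousAt.continuousWithinAt
  have exp_measurable :
      AEStronglyMeasurable (fun s ↦ exp (-v * φ s)) (volume.restrict (Ioi α)) :=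
    (φ_continuousOn.const_mul (-v)).rexp.aestronglyMeasurable measurableSet_Ioi
  have remainder_eq (s : ℝ) : exp (-v * φ s) • (f s - φ' s • g) =
      exp (-v * φ s) • f s - (exp (-v * φ s) * φ' s) • g := by rw [smul_sub, smul_smul]
  have remainder_le : ∀ᵐ s ∂volume.restrict (Ioi α),
      ‖exp (-v * φ s) • f s - (exp (-v * φ s) * φ' s) • g‖ ≤
        L * exp (-v * φ α) * ((s - α) * exp (-((v * c - K) * (s - α)))) :=
    ae_restrict_of_forall_mem measurableSet_Ioi fun s hs ↦ remainder_eq s ▸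
      norm_exp_neg_mul_smul_le hv.le (add_mul_sub_le_of_le_hasDerivAt hφ hc hs.out.le) (hfg s hs)
  have bound_integrable := (integrableOn_sub_mul_exp_neg_mul_sub_Ioi hr α).const_mul
    (L * exp (-v * φ α))
  have remainder_integrable :=
    bound_integrable.mono' ((exp_measurable.smul hf).sub main_integrable.1) remainder_le
  have f_integrable : IntegrableOn (fun s ↦ exp (-v * φ s) • f s) (Ioi α) :=
    (remainder_integrable.add main_integrable).congr (.of_forall fun s ↦ sub_add_cancel _ _)
  rw [← main_integral, ← integral_sub f_integrable main_integrable,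
    ← integral_sub_mul_exp_neg_mul_sub_Ioi hr α, ← integral_const_mul]
  exact norm_integral_le_of_norm_le bound_integrable remainder_le

theorem isBigO_integral_exp_neg_mul_smul_sub_of_norm_sub_deriv_smul_le
    (hφ : ∀ s ∈ Ici α, HasDerivAt φ (φ' s) s) (hc₀ : 0 < c) (hc : ∀ s ∈ Ioi α, c ≤ φ' s)
    (hf : AEStronglyMeasurable f (volume.restrict (Ioi α)))
    (hfg : ∀ s ∈ Ioi α, ‖f s - φ' s • g‖ ≤ L * ((s - α) * exp (K * (s - α)))) :
    (fun v ↦ (∫ s in Ioi α, exp (-v * φ s) • f s) - (v⁻¹ * exp (-v * φ α)) • g)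
      =O[atTop] fun v ↦ (v ^ 2)⁻¹ * exp (-v * φ α) := by
  have hL : 0 ≤ L := by
    have := (norm_nonneg _).trans (hfg (α + 1) (lt_add_one α))
    exact nonneg_of_mul_nonneg_left this (by rw [add_sub_cancel_left]; positivity)
  refine .of_bound (L * ((c / 2) ^ 2)⁻¹) ?_
  filter_upwards [eventually_gt_atTop 0, eventually_ge_atTop (2 * K / c)] with v hv hvK
  have K_le : K ≤ v * c / 2 := by
    rw [div_le_iff₀ hc₀] at hvK
    linarith
  have rate_le : v * (c / 2) ≤ v * c - K := by linarith
  have hvc : 0 < v * (c / 2) := by positivity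
  calc _ ≤ L * exp (-v * φ α) * ((v * c - K) ^ 2)⁻¹ :=
        norm_integral_exp_neg_mul_smul_sub_le hφ hc₀ hc hf hfg hv (by linarith)
    _ ≤ L * exp (-v * φ α) * ((v * (c / 2)) ^ 2)⁻¹ := by gcongr
    _ = L * ((c / 2) ^ 2)⁻¹ * ‖(v ^ 2)⁻¹ * exp (-v * φ α)‖ := by
        rw [norm_of_nonneg (by positivity), mul_pow, mul_inv]
        ring

theorem isBigO_integral_exp_neg_mul_smul_sub {L' : ℝ}
    (hφ : ∀ s ∈ Ici α, HasDerivAt φ (φ' s) s) (hφ'_pos : 0 < φ' α)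
    (hφ'_le : ∀ s ∈ Ioi α, φ' α ≤ φ' s) (hφ'_sub : ∀ s ∈ Ioi α, |φ' s - φ' α| ≤ L' * (s - α))
    (hf : AEStronglyMeasurable f (volume.restrict (Ioi α))) (hK : 0 ≤ K)
    (hf_sub : ∀ s ∈ Ioi α, ‖f s - f α‖ ≤ L * ((s - α) * exp (K * (s - α)))) :
    (fun v ↦ (∫ s in Ioi α, exp (-v * φ s) • f s) -
        (v⁻¹ * exp (-v * φ α)) • (φ' α)⁻¹ • f α)
      =O[atTop] fun v ↦ (v ^ 2)⁻¹ * exp (-v * φ α) := by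
  set g := (φ' α)⁻¹ • f α
  refine isBigO_integral_exp_neg_mul_smul_sub_of_norm_sub_deriv_smul_le (K := K)
    (L := L + L' * ‖g‖) hφ hφ'_pos hφ'_le hf fun s hs ↦ ?_
  have f_α_eq : φ' α • g = f α := smul_inv_smul₀ hφ'_pos.ne' _
  have one_le : 1 ≤ exp (K * (s - α)) := one_le_exp (mul_nonneg hK (sub_pos.2 hs).le)
  have slope_le : |φ' s - φ' α| ≤ L' * ((s - α) * exp (K * (s - α))) := by
    rw [← mul_assoc]
    exact (hφ'_sub s hs).trans
      (le_mul_of_one_le_right ((abs_nonneg _).trans (hφ'_sub s hs)) one_le)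
  calc ‖f s - φ' s • g‖
      = ‖(f s - f α) - (φ' s - φ' α) • g‖ := by
        rw [sub_smul, f_α_eq, sub_sub_sub_cancel_right]
    _ ≤ ‖f s - f α‖ + |φ' s - φ' α| * ‖g‖ := by
        rw [← norm_eq_abs, ← norm_smul]
        exact norm_sub_le _ _
    _ ≤ L * ((s - α) * exp (K * (s - α))) +
          L' * ((s - α) * exp (K * (s - α))) * ‖g‖ := by
        gcongr
        exact hf_sub s hs
    _ = (L + L' * ‖g‖) * ((s - α) * exp (K * (s - α))) := by ring

end LaplaceEndpoint

section OneAddSq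

lemma abs_exp_sub_one_le_mul_exp (x : ℝ) : |exp x - 1| ≤ |x| * exp |x| := by
  have h := Complex.norm_exp_sub_sum_le_norm_mul_exp x 1
  norm_num at h
  exact_mod_cast h

lemma abs_exp_sub_exp_le {x y d : ℝ} (h : |x - y| ≤ d) :
    |exp x - exp y| ≤ exp y * (d * exp d) :=
  calc |exp x - exp y| = exp y * |exp (x - y) - 1| := by
        rw [← abs_of_pos (exp_pos y), ← abs_mul, abs_of_pos (exp_pos y), mul_sub_one, ← exp_add,
          add_sub_cancel]
    _ ≤ exp y * (|x - y| * exp |x - y|) := by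
        gcongr
        exact abs_exp_sub_one_le_mul_exp _
    _ ≤ exp y * (d * exp d) := by
        have := (abs_nonneg _).trans h
        gcongr

lemma lipschitzWith_log_one_add_sq : LipschitzWith 1 fun s : ℝ ↦ log (1 + s ^ 2) := by
  have hderiv (s : ℝ) : HasDerivAt (fun s : ℝ ↦ log (1 + s ^ 2)) (2 * s / (1 + s ^ 2)) s := by
    simpa using ((hasDerivAt_pow 2 s).const_add 1).log (by positivity)
  refine lipschitzWith_of_nnnorm_deriv_le (fun s ↦ (hderiv s).differentiableAt) fun s ↦ ?_
  rw [(hderiv s).deriv, ← NNReal.coe_le_coe, coe_nnnorm, norm_eq_abs, abs_le, NNReal.coe_one,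
    le_div_iff₀ (by positivity), div_le_one₀ (by positivity)]
  constructor <;> linarith [sq_nonneg (s - 1), sq_nonneg (s + 1)]

lemma abs_one_add_sq_rpow_sub_le (q a s : ℝ) :
    |(1 + s ^ 2) ^ q - (1 + a ^ 2) ^ q| ≤
      (1 + a ^ 2) ^ q * (|q| * |s - a| * exp (|q| * |s - a|)) := by
  rw [rpow_def_of_pos (by positivity), rpow_def_of_pos (by positivity)]
  refine abs_exp_sub_exp_le ?_
  rw [← sub_mul, abs_mul, mul_comm]
  refine mul_le_mul_of_nonneg_left ?_ (abs_nonneg q)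
  simpa [dist_eq] using lipschitzWith_log_one_add_sq.dist_le_mul s a

lemma hasDerivAt_sqrt_one_add_sq (s : ℝ) :
    HasDerivAt (fun s ↦ √(1 + s ^ 2)) (s / √(1 + s ^ 2)) s := by
  refine (((hasDerivAt_pow 2 s).const_add 1).sqrt (by positivity)).congr_deriv ?_
  simp [mul_div_mul_left]

lemma strictMono_div_sqrt_one_add_sq : StrictMono fun s : ℝ ↦ s / √(1 + s ^ 2) := by
  simpa only [sin_arctan] using sin_arctan_strictMono

lemma lipschitzWith_arctan : LipschitzWith 1 arctan := by
  refine lipschitzWith_of_nnnorm_deriv_le differentiable_arctan fun s ↦ ?_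
  rw [Real.deriv_arctan, ← NNReal.coe_le_coe, coe_nnnorm, norm_of_nonneg (by positivity)]
  exact div_le_one_of_le₀ (le_add_of_nonneg_right (sq_nonneg s)) (by positivity)

lemma lipschitzWith_div_sqrt_one_add_sq : LipschitzWith 1 fun s : ℝ ↦ s / √(1 + s ^ 2) := by
  simpa only [sin_arctan, one_mul, Function.comp_def] using
    lipschitzWith_sin.comp lipschitzWith_arctan

variable {β κ α : ℝ}

theorem isBigO_integral_one_add_sq_rpow_mul_exp_sub (q : ℝ) (hβ : 0 ≤ β)
    (hslope : 0 < β * (α / √(1 + α ^ 2)) + κ) :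
    (fun v ↦ (∫ s in Ioi α, (1 + s ^ 2) ^ q * exp (-v * (β * √(1 + s ^ 2) + κ * s))) -
        (1 + α ^ 2) ^ q / (β * (α / √(1 + α ^ 2)) + κ) * v⁻¹ *
          exp (-v * (β * √(1 + α ^ 2) + κ * α)))
      =O[atTop] fun v ↦ (v ^ 2)⁻¹ * exp (-v * (β * √(1 + α ^ 2) + κ * α)) := by
  have phase_hasDerivAt (s : ℝ) :
      HasDerivAt (fun s ↦ β * √(1 + s ^ 2) + κ * s) (β * (s / √(1 + s ^ 2)) + κ) s := by
    simpa using
      ((hasDerivAt_sqrt_one_add_sq s).const_mul β).fun_add ((hasDerivAt_id s).const_mul κ)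
  have slope_le (s : ℝ) (hs : s ∈ Ioi α) :
      β * (α / √(1 + α ^ 2)) + κ ≤ β * (s / √(1 + s ^ 2)) + κ :=
    add_le_add_left (mul_le_mul_of_nonneg_left
      (strictMono_div_sqrt_one_add_sq.monotone hs.out.le) hβ) κ
  have slope_sub (s : ℝ) (hs : s ∈ Ioi α) :
      |β * (s / √(1 + s ^ 2)) + κ - (β * (α / √(1 + α ^ 2)) + κ)| ≤ β * (s - α) := by
    rw [add_sub_add_right_eq_sub, ← mul_sub, abs_mul, abs_of_nonneg hβ]
    refine mul_le_mul_of_nonneg_left ?_ hβ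
    simpa [dist_eq, abs_of_pos (sub_pos.2 hs.out)] using
      lipschitzWith_div_sqrt_one_add_sq.dist_le_mul s α
  have weight_measurable :
      AEStronglyMeasurable (fun s : ℝ ↦ (1 + s ^ 2) ^ q) (volume.restrict (Ioi α)) :=
    Measurable.aestronglyMeasurable (by fun_prop)
  have weight_sub (s : ℝ) (hs : s ∈ Ioi α) : ‖(1 + s ^ 2) ^ q - (1 + α ^ 2) ^ q‖ ≤
      (1 + α ^ 2) ^ q * |q| * ((s - α) * exp (|q| * (s - α))) := by
    have h := abs_one_add_sq_rpow_sub_le q α s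
    rw [abs_of_pos (sub_pos.2 hs.out)] at h
    rwa [norm_eq_abs, mul_assoc, ← mul_assoc |q|]
  refine (isBigO_integral_exp_neg_mul_smul_sub (fun s _ ↦ phase_hasDerivAt s) hslope slope_le
    slope_sub weight_measurable (abs_nonneg q) weight_sub).congr_left fun v ↦ ?_
  simp only [smul_eq_mul, mul_comm (exp _), div_eq_inv_mul]
  ring

end OneAddSq

lemma abs_mul_sqrt_lt_sqrt_sq_mul_add_sq (θ : ℝ) {x b : ℝ} (hx : 0 ≤ x) (hb : b ≠ 0) :
    |θ| * √x < √(θ ^ 2 * x + b ^ 2) := by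
  rw [← sqrt_sq_eq_abs, ← sqrt_mul (sq_nonneg θ)]
  exact sqrt_lt_sqrt (by positivity) (lt_add_of_pos_right _ (by positivity))

/-- Key Laplace endpoint asymptotic (case a = 0 of equation (12)): with
β = √(θ²(1+α²) + b²), γ = β + θ√(1+α²) and phase φ(s) = β√(1+s²) + αθs,
∫_α^∞ (1+s²)^{(p−3/2)/2} e^{−vφ(s)} ds
  = [(1+α²)^{(2p−1)/4}/(αγ)]·v^{−1}·e^{−vφ(α)}·(1 + O(1/v))  as v → ∞. -/
theorem stmt_11 (p θ α b : ℝ) (hα : 0 < α) (hb : 0 < b)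
    (β γ : ℝ) (hβ : β = Real.sqrt (θ ^ 2 * (1 + α ^ 2) + b ^ 2))
    (hγ : γ = β + θ * Real.sqrt (1 + α ^ 2))
    (φ : ℝ → ℝ) (hφ : ∀ s, φ s = β * Real.sqrt (1 + s ^ 2) + α * θ * s) :
    ∃ M > (0 : ℝ), ∃ v₀ > (0 : ℝ), ∀ v, v₀ ≤ v →
      |(∫ s in Ioi α, (1 + s ^ 2) ^ ((p - 3 / 2) / 2) * Real.exp (-v * φ s)) /
          ((1 + α ^ 2) ^ ((2 * p - 1) / 4) / (α * γ) * v⁻¹ * Real.exp (-v * φ α)) - 1|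
        ≤ M / v := by
  have γ_pos : 0 < γ := by
    have θ_lt := abs_mul_sqrt_lt_sqrt_sq_mul_add_sq θ (x := 1 + α ^ 2) (by positivity) hb.ne'
    have θ_le := mul_le_mul_of_nonneg_right (neg_abs_le θ) (sqrt_nonneg (1 + α ^ 2))
    linarith
  have slope_eq : β * (α / √(1 + α ^ 2)) + α * θ = α * γ / √(1 + α ^ 2) := by
    rw [hγ]
    field_simp
  have coefficient_eq : (1 + α ^ 2) ^ ((p - 3 / 2) / 2) / (α * γ / √(1 + α ^ 2)) =
      (1 + α ^ 2) ^ ((2 * p - 1) / 4) / (α * γ) := by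
    rw [div_div_eq_mul_div, sqrt_eq_rpow, ← rpow_add (by positivity)]
    ring_nf
  have asymptotic := isBigO_integral_one_add_sq_rpow_mul_exp_sub (β := β) (κ := α * θ) (α := α)
    ((p - 3 / 2) / 2) (hβ ▸ sqrt_nonneg _) (by rw [slope_eq]; positivity)
  simp only [slope_eq, coefficient_eq, ← hφ] at asymptotic
  set g := (1 + α ^ 2) ^ ((2 * p - 1) / 4) / (α * γ)
  have g_pos : 0 < g := by positivity
  refine exists_abs_le_div_of_isBigO_inv (isBigO_div_sub_one ?_ ?_)
  · filter_upwards [eventually_gt_atTop 0] with v hv using by positivity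
  · exact ((isBigO_const_mul_right_iff g_pos.ne').2 asymptotic).congr_right fun v ↦ by ring
end

section
/- Let p > 0, b > 0, θ ∈ ℝ. Let W be a random variable with the Gamma distribution of shape p and rate b²/2 (density (b²/2)^p·w^{p−1}·e^{−(b²/2)w}/Γ(p) on (0, ∞)) and let Z₁ be standard normal, independent of W. Set X₁ = θW + √W·Z₁ and δ = θ + √(θ² + b²). Then P(X₁ ≤ x) = A·|x|^{p−1}·e^{−δ|x|}·(1 + O(1/|x|)) as x → −∞, where A = [2^p·b^{−2p}·Γ(p)·(θ² + b²)^{p/2}·δ]^{−1}; that is, there exist M > 0 and x₀ < 0 such that for all x ≤ x₀, |P(X₁ ≤ x)/(A|x|^{p−1}e^{−δ|x|}) − 1| ≤ M/|x|. -/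
open MeasureTheory Real Set

/-!
Comparing moment generating functions near `0` shows that `X₁` has the law of a difference `G₁ - G₂`
of independent Gamma variables of shape `p` and rates `ε = √(θ² + b²) - θ` and `δ`: the quadratic
`b² / 2 - θ t - t² / 2` factors as `(ε - t) (δ + t) / 2`. The lower tail of `V - G₂` for an
independent `V ≥ 0` follows from the estimate
`f (y + s) = f y * (exp (-δ s) + O(1 / y) * exp (-δ s / 2))`, uniform in `s ≥ 0`, for the density
`f` of `G₂`: integrating over `s ≥ V` gives
`P(V - G₂ ≤ -y) = (f y / δ) * (E[exp (-δ V)] + O(1 / y))`, and for `V = G₁` the expectation is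
`(ε / (ε + δ)) ^ p`.
-/

section

open Filter Topology ProbabilityTheory

section MomentGeneratingFunction

variable {Ω Ω' : Type*} {mΩ : MeasurableSpace Ω} {mΩ' : MeasurableSpace Ω'}

theorem map_eq_map_of_mgf_eventuallyEq {μ : Measure Ω} {ν : Measure Ω'} [IsFiniteMeasure μ]
    [IsFiniteMeasure ν] {X : Ω → ℝ} {Y : Ω' → ℝ} (hX : 0 ∈ interior (integrableExpSet X μ))
    (hY : 0 ∈ interior (integrableExpSet Y ν)) (h : mgf X μ =ᶠ[𝓝 0] mgf Y ν) :
    μ.map X = ν.map Y := by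
  set S := interior (integrableExpSet X μ) ∩ interior (integrableExpSet Y ν)
  have h_real : ∀ᶠ x : ℝ in 𝓝[≠] 0, complexMGF X μ x = complexMGF Y ν x := by
    filter_upwards [nhdsWithin_le_nhds h] with x hx
    rw [complexMGF_ofReal, complexMGF_ofReal, hx]
  have h_ofReal : Tendsto ((↑) : ℝ → ℂ) (𝓝[≠] 0) (𝓝[≠] 0) :=
    Complex.continuous_ofReal.continuousWithinAt.tendsto_nhdsWithin fun x hx ↦ by simpa using hx
  have h_strip : EqOn (complexMGF X μ) (complexMGF Y ν) {z | z.re ∈ S} := by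
    refine AnalyticOnNhd.eqOn_of_preconnected_of_frequently_eq (z₀ := 0)
      (analyticOnNhd_complexMGF.mono fun z hz ↦ hz.1)
      (analyticOnNhd_complexMGF.mono fun z hz ↦ hz.2) ?_ ⟨hX, hY⟩
      (h_ofReal.frequently h_real.frequently)
    have hS : Convex ℝ S := convex_integrableExpSet.interior.inter convex_integrableExpSet.interior
    exact (hS.linear_preimage Complex.reLm).isPreconnected
  refine Measure.ext_of_charFun (funext fun t ↦ ?_)
  rw [← complexMGF_mul_I (aemeasurable_of_mem_interior_integrableExpSet hX),
    ← complexMGF_mul_I (aemeasurable_of_mem_interior_integrableExpSet hY)]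
  exact h_strip (by simpa using ⟨hX, hY⟩)

variable {μ : Measure Ω} {ν : Measure Ω'} {X : Ω → ℝ} {Y : Ω' → ℝ} {t : ℝ}

lemma mgf_sub_prod [SFinite μ] [SFinite ν] :
    mgf (fun q : Ω × Ω' ↦ X q.1 - Y q.2) (μ.prod ν) t = mgf X μ t * mgf Y ν (-t) := by
  simp only [mgf, ← integral_prod_mul, ← Real.exp_add]
  congr! 3
  ring

lemma mem_integrableExpSet_sub_prod (hX : t ∈ integrableExpSet X μ)
    (hY : -t ∈ integrableExpSet Y ν) :
    t ∈ integrableExpSet (fun q : Ω × Ω' ↦ X q.1 - Y q.2) (μ.prod ν) := by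
  refine (Integrable.mul_prod hX hY).congr (ae_of_all _ fun q ↦ ?_)
  simp only [← Real.exp_add]
  ring_nf

end MomentGeneratingFunction

section MeanVarianceMixture

variable {ρ : Measure ℝ} {θ t : ℝ}

lemma integral_exp_mul_add_sqrt_mul_gaussianReal (θ t : ℝ) {w : ℝ} (hw : 0 ≤ w) :
    ∫ z, exp (t * (θ * w + √w * z)) ∂gaussianReal 0 1 = exp ((θ * t + t ^ 2 / 2) * w) := by
  have h : mgf (fun z ↦ θ * w + √w * z) (gaussianReal 0 1) t = _ := mgf_const_add _
  rw [mgf] at h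
  rw [h, mgf_const_mul, mgf_fun_id_gaussianReal, ← Real.exp_add, mul_pow, sq_sqrt hw]
  simp only [NNReal.coe_one]
  ring_nf

variable (hρ : ∀ᵐ w ∂ρ, 0 ≤ w) (ht : θ * t + t ^ 2 / 2 ∈ integrableExpSet id ρ)
include hρ ht

lemma mem_integrableExpSet_meanVarianceMixture :
    t ∈ integrableExpSet (fun q : ℝ × ℝ ↦ θ * q.1 + √q.1 * q.2) (ρ.prod (gaussianReal 0 1)) := by
  refine (integrable_prod_iff (by fun_prop)).2 ⟨ae_of_all _ fun w ↦ ?_, ht.congr ?_⟩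
  · refine ((integrable_exp_mul_gaussianReal (t * √w)).const_mul (exp (t * (θ * w)))).congr
      (ae_of_all _ fun z ↦ ?_)
    simp only [← Real.exp_add]
    ring_nf
  · filter_upwards [hρ] with w hw
    simp only [Real.norm_eq_abs, Real.abs_exp, id,
      integral_exp_mul_add_sqrt_mul_gaussianReal θ t hw]

lemma mgf_meanVarianceMixture [SFinite ρ] :
    mgf (fun q : ℝ × ℝ ↦ θ * q.1 + √q.1 * q.2) (ρ.prod (gaussianReal 0 1)) t =
      mgf id ρ (θ * t + t ^ 2 / 2) := by
  rw [mgf, integral_prod _ (mem_integrableExpSet_meanVarianceMixture hρ ht)]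
  refine integral_congr_ae ?_
  filter_upwards [hρ] with w hw
  exact integral_exp_mul_add_sqrt_mul_gaussianReal θ t hw

end MeanVarianceMixture

section Gamma

variable {p r t : ℝ}

lemma ae_nonneg_gammaMeasure (p r : ℝ) : ∀ᵐ x ∂gammaMeasure p r, 0 ≤ x := by
  rw [ae_iff, gammaMeasure]
  simp only [not_le]
  exact (withDensity_apply _ measurableSet_Iio).trans (lintegral_gammaPDF_of_nonpos le_rfl)

lemma gammaMeasure_eq_withDensity_ite_pos (p r : ℝ) :
    gammaMeasure p r = volume.withDensity fun x ↦ ENNReal.ofReal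
      (if 0 < x then r ^ p * x ^ (p - 1) * exp (-r * x) / Gamma p else 0) := by
  refine withDensity_congr_ae ?_
  filter_upwards [Measure.ae_ne volume 0] with x hx
  rw [gammaPDF_eq]
  simp only [le_iff_lt_or_eq, hx.symm, or_false]
  ring_nf

lemma gammaPDFReal_mul_exp (p : ℝ) (hr : 0 ≤ r) (ht : t < r) (x : ℝ) :
    gammaPDFReal p r x * exp (t * x) = (r / (r - t)) ^ p * gammaPDFReal p (r - t) x := by
  have hrt : 0 < r - t := sub_pos.2 ht
  have h_exp : exp (-(r * x)) * exp (t * x) = exp (-((r - t) * x)) := by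
    rw [← Real.exp_add]; ring_nf
  unfold gammaPDFReal
  split_ifs
  · rw [div_rpow hr hrt.le, mul_assoc, h_exp]
    field_simp
  · simp only [zero_mul, mul_zero]

lemma lintegral_exp_mul_gammaMeasure (hp : 0 < p) (hr : 0 < r) (ht : t < r) :
    ∫⁻ x, ENNReal.ofReal (exp (t * x)) ∂gammaMeasure p r =
      ENNReal.ofReal ((r / (r - t)) ^ p) := by
  have hrt : 0 < r - t := sub_pos.2 ht
  have h_meas (s : ℝ) : Measurable (gammaPDF p s) := (measurable_gammaPDFReal p s).ennreal_ofReal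
  have h_tilt (x : ℝ) : gammaPDF p r x * ENNReal.ofReal (exp (t * x)) =
      ENNReal.ofReal ((r / (r - t)) ^ p) * gammaPDF p (r - t) x := by
    rw [gammaPDF, gammaPDF, ← ENNReal.ofReal_mul (gammaPDFReal_nonneg hp hr x),
      ← ENNReal.ofReal_mul (by positivity), gammaPDFReal_mul_exp p hr.le ht]
  rw [gammaMeasure, lintegral_withDensity_eq_lintegral_mul _ (h_meas r) (by fun_prop)]
  simp only [Pi.mul_apply, h_tilt]
  rw [lintegral_const_mul _ (h_meas _), lintegral_gammaPDF_eq_one hp hrt, mul_one]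

lemma mem_integrableExpSet_gammaMeasure (hp : 0 < p) (hr : 0 < r) (ht : t < r) :
    t ∈ integrableExpSet id (gammaMeasure p r) := by
  refine ⟨by fun_prop, ?_⟩
  rw [hasFiniteIntegral_iff_ofReal (ae_of_all _ fun _ ↦ (exp_pos _).le)]
  exact (lintegral_exp_mul_gammaMeasure hp hr ht).trans_lt ENNReal.ofReal_lt_top

lemma mgf_gammaMeasure (hp : 0 < p) (hr : 0 < r) (ht : t < r) :
    mgf id (gammaMeasure p r) t = (r / (r - t)) ^ p := by
  have := sub_pos.2 ht
  rw [mgf, integral_eq_lintegral_of_nonneg_ae (ae_of_all _ fun _ ↦ (exp_pos _).le) (by fun_prop)]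
  simp only [id, lintegral_exp_mul_gammaMeasure hp hr ht]
  exact ENNReal.toReal_ofReal (by positivity)

end Gamma

theorem map_meanVarianceMixture_gammaMeasure_eq_map_sub {p ε δ : ℝ} (hp : 0 < p) (hε : 0 < ε)
    (hδ : 0 < δ) :
    ((gammaMeasure p (δ * ε / 2)).prod (gaussianReal 0 1)).map
        (fun q ↦ (δ - ε) / 2 * q.1 + √q.1 * q.2) =
      ((gammaMeasure p ε).prod (gammaMeasure p δ)).map (fun q ↦ q.1 - q.2) := by
  have hr : 0 < δ * ε / 2 := by positivity
  have := isProbabilityMeasure_gammaMeasure hp hr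
  have := isProbabilityMeasure_gammaMeasure hp hε
  have := isProbabilityMeasure_gammaMeasure hp hδ
  have h_strip : Ioo (-δ) ε ∈ 𝓝 0 := Ioo_mem_nhds (neg_lt_zero.2 hδ) hε
  have h_factor (t : ℝ) :
      δ * ε / 2 - ((δ - ε) / 2 * t + t ^ 2 / 2) = (ε - t) * (δ - -t) / 2 := by ring
  have h_rate {t : ℝ} (ht : t ∈ Ioo (-δ) ε) : (δ - ε) / 2 * t + t ^ 2 / 2 < δ * ε / 2 := by
    rw [← sub_pos, h_factor]
    have : 0 < (ε - t) * (δ - -t) := mul_pos (by linarith [ht.2]) (by linarith [ht.1])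
    positivity
  refine map_eq_map_of_mgf_eventuallyEq ?_ ?_ ?_
  · refine mem_interior_iff_mem_nhds.2 (mem_of_superset h_strip fun t ht ↦ ?_)
    exact mem_integrableExpSet_meanVarianceMixture (ae_nonneg_gammaMeasure _ _)
      (mem_integrableExpSet_gammaMeasure hp hr (h_rate ht))
  · refine mem_interior_iff_mem_nhds.2 (mem_of_superset h_strip fun t ht ↦ ?_)
    exact mem_integrableExpSet_sub_prod (mem_integrableExpSet_gammaMeasure hp hε ht.2)
      (mem_integrableExpSet_gammaMeasure hp hδ (neg_lt.1 ht.1))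
  · filter_upwards [h_strip] with t ht
    have hεt : 0 < ε - t := sub_pos.2 ht.2
    have hδt : 0 < δ - -t := sub_pos.2 (neg_lt.1 ht.1)
    rw [mgf_meanVarianceMixture (ae_nonneg_gammaMeasure _ _)
        (mem_integrableExpSet_gammaMeasure hp hr (h_rate ht)), mgf_gammaMeasure hp hr (h_rate ht)]
    refine Eq.trans ?_ (mgf_sub_prod (X := id) (Y := id)).symm
    rw [mgf_gammaMeasure hp hε ht.2, mgf_gammaMeasure hp hδ (neg_lt.1 ht.1), h_factor,
      ← mul_rpow (by positivity) (by positivity)]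
    congr 1
    field_simp

section GammaTail

lemma abs_exp_sub_one_le_abs_mul_exp_abs (a : ℝ) : |exp a - 1| ≤ |a| * exp |a| := by
  have h := Complex.norm_exp_sub_sum_le_norm_mul_exp a 1
  simp only [Finset.sum_range_one, pow_zero, Nat.factorial_zero, Nat.cast_one, div_one,
    Complex.norm_real, pow_one, Real.norm_eq_abs] at h
  exact_mod_cast h

lemma abs_one_add_rpow_sub_one_le (q : ℝ) {u : ℝ} (hu : 0 ≤ u) :
    |(1 + u) ^ q - 1| ≤ |q| * u * exp (|q| * u) := by
  have h_log : |log (1 + u) * q| ≤ |q| * u := by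
    rw [abs_mul, abs_of_nonneg (log_nonneg (by linarith)), mul_comm]
    gcongr
    linarith [log_le_sub_one_of_pos (show 0 < 1 + u by linarith)]
  rw [rpow_def_of_pos (by linarith)]
  exact (abs_exp_sub_one_le_abs_mul_exp_abs _).trans (by gcongr)

variable {p d y : ℝ}

lemma abs_one_add_div_rpow_sub_one_le {q : ℝ} (hd : 0 < d) (hy : 0 < y) (hdy : 4 * |q| ≤ d * y)
    {s : ℝ} (hs : 0 ≤ s) : |(1 + s / y) ^ q - 1| ≤ 4 * |q| / (d * y) * exp (d * s / 2) := by
  have h_linear : s ≤ 4 / d * exp (d * s / 4) := by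
    have := Real.add_one_le_exp (d * s / 4)
    calc s = 4 / d * (d * s / 4) := by field_simp
      _ ≤ 4 / d * exp (d * s / 4) := by gcongr; linarith
  have h_small : |q| * (s / y) ≤ d * s / 4 := by
    rw [mul_div_assoc', div_le_iff₀ hy]
    nlinarith
  calc |(1 + s / y) ^ q - 1|
    _ ≤ |q| * (s / y) * exp (|q| * (s / y)) := abs_one_add_rpow_sub_one_le _ (by positivity)
    _ ≤ |q| * (4 / d * exp (d * s / 4) / y) * exp (d * s / 4) := by gcongr
    _ = 4 * |q| / (d * y) * (exp (d * s / 4) * exp (d * s / 4)) := by field_simp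
    _ = 4 * |q| / (d * y) * exp (d * s / 2) := by rw [← Real.exp_add]; ring_nf

lemma integrable_gammaPDFReal (hp : 0 < p) (hd : 0 < d) : Integrable (gammaPDFReal p d) := by
  refine ⟨by fun_prop, ?_⟩
  rw [hasFiniteIntegral_iff_ofReal (ae_of_all _ (gammaPDFReal_nonneg hp hd))]
  exact (lintegral_gammaPDF_eq_one hp hd).trans_lt ENNReal.one_lt_top

lemma gammaMeasure_real_Ici_eq_integral (hp : 0 < p) (hd : 0 < d) (u : ℝ) :
    (gammaMeasure p d).real (Ici u) = ∫ t in Ioi 0, gammaPDFReal p d (u + t) := by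
  have h_density : (gammaMeasure p d).real (Ici u) = ∫ x in Ioi u, gammaPDFReal p d x := by
    rw [← integral_Ici_eq_integral_Ioi, gammaMeasure, measureReal_def,
      withDensity_apply _ measurableSet_Ici]
    exact (integral_eq_lintegral_of_nonneg_ae (ae_of_all _ (gammaPDFReal_nonneg hp hd))
      (by fun_prop)).symm
  have h_shift := (measurePreserving_add_left volume u).setIntegral_preimage_emb
    (measurableEmbedding_addLeft u) (gammaPDFReal p d) (Ioi u)
  rw [h_density, ← h_shift, preimage_const_add_Ioi, sub_self]

lemma abs_gammaPDFReal_add_sub_le (hp : 0 < p) (hd : 0 < d) (hy : 0 < y)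
    (hdy : 4 * |p - 1| ≤ d * y) {s : ℝ} (hs : 0 ≤ s) :
    |gammaPDFReal p d (y + s) - gammaPDFReal p d y * exp (-d * s)| ≤
      gammaPDFReal p d y * (4 * |p - 1| / (d * y)) * exp (-(d / 2) * s) := by
  have h_ratio : gammaPDFReal p d (y + s) =
      gammaPDFReal p d y * exp (-d * s) * (1 + s / y) ^ (p - 1) := by
    have h_exp : exp (-(d * (y + s))) = exp (-(d * y)) * exp (-d * s) := by
      rw [← Real.exp_add]; ring_nf
    have h_rpow : (y + s) ^ (p - 1) = y ^ (p - 1) * (1 + s / y) ^ (p - 1) := by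
      rw [← mul_rpow hy.le (by positivity)]; field_simp
    simp only [gammaPDFReal, if_pos hy.le, if_pos (add_nonneg hy.le hs), h_exp, h_rpow]
    ring
  have hf : 0 ≤ gammaPDFReal p d y := gammaPDFReal_nonneg hp hd y
  calc |gammaPDFReal p d (y + s) - gammaPDFReal p d y * exp (-d * s)|
    _ = gammaPDFReal p d y * exp (-d * s) * |(1 + s / y) ^ (p - 1) - 1| := by
      rw [h_ratio, ← mul_sub_one, abs_mul, abs_of_nonneg (by positivity)]
    _ ≤ gammaPDFReal p d y * exp (-d * s) * (4 * |p - 1| / (d * y) * exp (d * s / 2)) := by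
      gcongr
      exact abs_one_add_div_rpow_sub_one_le hd hy hdy hs
    _ = gammaPDFReal p d y * (4 * |p - 1| / (d * y)) * (exp (-d * s) * exp (d * s / 2)) := by ring
    _ = gammaPDFReal p d y * (4 * |p - 1| / (d * y)) * exp (-(d / 2) * s) := by
      rw [← Real.exp_add]; ring_nf

lemma abs_gammaMeasure_real_Ici_add_sub_le (hp : 0 < p) (hd : 0 < d) (hy : 0 < y)
    (hdy : 4 * |p - 1| ≤ d * y) {g : ℝ} (hg : 0 ≤ g) :
    |(gammaMeasure p d).real (Ici (y + g)) - gammaPDFReal p d y / d * exp (-d * g)| ≤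
      gammaPDFReal p d y / d * (8 * |p - 1| / d / y) := by
  have h_exp_int {c : ℝ} (hc : 0 < c) : IntegrableOn (fun t ↦ exp (-c * (g + t))) (Ioi 0) := by
    simp only [mul_add, Real.exp_add]
    exact (integrableOn_exp_mul_Ioi (neg_lt_zero.2 hc) 0).const_mul _
  have h_exp_integral {c : ℝ} (hc : 0 < c) :
      ∫ t in Ioi 0, exp (-c * (g + t)) = exp (-c * g) / c := by
    simp only [mul_add, Real.exp_add]
    rw [integral_const_mul, integral_exp_mul_Ioi (neg_lt_zero.2 hc)]
    simp [div_eq_mul_inv]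
  have hd2 : 0 < d / 2 := half_pos hd
  have hf : 0 ≤ gammaPDFReal p d y := gammaPDFReal_nonneg hp hd y
  have h_bound : ∀ᵐ t ∂volume.restrict (Ioi 0),
      ‖gammaPDFReal p d (y + g + t) - gammaPDFReal p d y * exp (-d * (g + t))‖ ≤
        gammaPDFReal p d y * (4 * |p - 1| / (d * y)) * exp (-(d / 2) * (g + t)) := by
    refine (ae_restrict_iff' measurableSet_Ioi).2 (ae_of_all _ fun t (ht : 0 < t) ↦ ?_)
    rw [add_assoc]
    exact abs_gammaPDFReal_add_sub_le hp hd hy hdy (by positivity)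
  have h_norm := norm_integral_le_of_norm_le ((h_exp_int hd2).const_mul _) h_bound
  rw [integral_sub ((integrable_gammaPDFReal hp hd).comp_add_left (y + g)).integrableOn
      ((h_exp_int hd).const_mul _), ← gammaMeasure_real_Ici_eq_integral hp hd, integral_const_mul,
    integral_const_mul, h_exp_integral hd, h_exp_integral hd2, ← mul_div_assoc, mul_div_right_comm]
    at h_norm
  have h_exp_le : exp (-(d / 2) * g) ≤ 1 := by
    rw [Real.exp_le_one_iff, neg_mul]
    exact neg_nonpos.2 (mul_nonneg hd2.le hg)
  calc _ ≤ _ := h_norm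
    _ ≤ gammaPDFReal p d y * (4 * |p - 1| / (d * y)) * (1 / (d / 2)) := by gcongr
    _ = gammaPDFReal p d y / d * (8 * |p - 1| / d / y) := by field_simp; ring

end GammaTail

lemma measureReal_map_sub_prod_Iic (μ ν : Measure ℝ) [IsFiniteMeasure ν] (x : ℝ) :
    ((μ.prod ν).map (fun q ↦ q.1 - q.2)).real (Iic x) = ∫ v, ν.real (Ici (v - x)) ∂μ := by
  have h_meas : MeasurableSet ((fun q : ℝ × ℝ ↦ q.1 - q.2) ⁻¹' Iic x) :=
    (by fun_prop : Measurable fun q : ℝ × ℝ ↦ q.1 - q.2) measurableSet_Iic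
  have h_section (v : ℝ) : Prod.mk v ⁻¹' ((fun q : ℝ × ℝ ↦ q.1 - q.2) ⁻¹' Iic x) = Ici (v - x) := by
    ext g
    exact sub_le_comm (a := v) (b := g)
  rw [map_measureReal_apply (by fun_prop) measurableSet_Iic, measureReal_def,
    Measure.prod_apply h_meas, ← integral_toReal
      (measurable_measure_prodMk_left h_meas).aemeasurable (ae_of_all _ fun _ ↦ measure_lt_top _ _)]
  simp only [h_section, measureReal_def]

theorem abs_measureReal_map_sub_gammaMeasure_Iic_sub_le {μ : Measure ℝ} [IsFiniteMeasure μ]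
    (hμ : ∀ᵐ v ∂μ, 0 ≤ v) {p d y : ℝ} (hp : 0 < p) (hd : 0 < d) (hy : 0 < y)
    (hdy : 4 * |p - 1| ≤ d * y) :
    |((μ.prod (gammaMeasure p d)).map (fun q ↦ q.1 - q.2)).real (Iic (-y)) -
        gammaPDFReal p d y / d * mgf id μ (-d)| ≤
      gammaPDFReal p d y / d * (8 * |p - 1| / d / y) * μ.real univ := by
  have := isProbabilityMeasure_gammaMeasure hp hd
  have h_tail_int : Integrable (fun v ↦ (gammaMeasure p d).real (Ici (y + v))) μ := by
    have h_anti : Antitone fun v ↦ (gammaMeasure p d).real (Ici (y + v)) :=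
      fun v w hvw ↦ measureReal_mono (μ := gammaMeasure p d) (Ici_subset_Ici.2 (by gcongr))
    exact .of_bound h_anti.measurable.aestronglyMeasurable 1
      (ae_of_all _ fun v ↦ by simp [abs_of_nonneg measureReal_nonneg, measureReal_le_one])
  have h_exp_int : Integrable (fun v ↦ exp (-d * v)) μ := by
    refine .of_bound (by fun_prop) 1 ?_
    filter_upwards [hμ] with v hv
    simpa using mul_nonneg hd.le hv
  simp only [measureReal_map_sub_prod_Iic, mgf, id, sub_neg_eq_add, add_comm _ y]
  rw [← integral_const_mul, ← integral_sub h_tail_int (h_exp_int.const_mul _)]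
  rw [← Real.norm_eq_abs]
  refine norm_integral_le_of_norm_le_const ?_
  filter_upwards [hμ] with v hv
  exact abs_gammaMeasure_real_Ici_add_sub_le hp hd hy hdy hv

theorem abs_measureReal_map_meanVarianceMixture_gammaMeasure_Iic_sub_le {p ε δ y : ℝ} (hp : 0 < p)
    (hε : 0 < ε) (hδ : 0 < δ) (hy : 0 < y) (hδy : 4 * |p - 1| ≤ δ * y) :
    |(((gammaMeasure p (δ * ε / 2)).prod (gaussianReal 0 1)).map
          (fun q ↦ (δ - ε) / 2 * q.1 + √q.1 * q.2)).real (Iic (-y)) -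
        gammaPDFReal p δ y / δ * (ε / (ε + δ)) ^ p| ≤
      gammaPDFReal p δ y / δ * (8 * |p - 1| / δ / y) := by
  have := isProbabilityMeasure_gammaMeasure hp hε
  have h :=
    abs_measureReal_map_sub_gammaMeasure_Iic_sub_le (ae_nonneg_gammaMeasure p ε) hp hδ hy hδy
  rwa [mgf_gammaMeasure hp hε (by linarith), sub_neg_eq_add, probReal_univ, mul_one,
    ← map_meanVarianceMixture_gammaMeasure_eq_map_sub hp hε hδ] at h

lemma measureReal_setOf_le_eq_map_prod_real_Iic {Ω : Type*} {mΩ : MeasurableSpace Ω} {P : Measure Ω}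
    [IsFiniteMeasure P] {X Y : Ω → ℝ} (hX : Measurable X) (hY : Measurable Y) (h : IndepFun X Y P)
    {f : ℝ × ℝ → ℝ} (hf : Measurable f) (x : ℝ) :
    P.real {ω | f (X ω, Y ω) ≤ x} = (((P.map X).prod (P.map Y)).map f).real (Iic x) := by
  rw [← (indepFun_iff_map_prod_eq_prod_map_map hX.aemeasurable hY.aemeasurable).1 h,
    Measure.map_map hf (by fun_prop), map_measureReal_apply (by fun_prop) measurableSet_Iic]
  rfl

lemma gaussianReal_zero_one_eq_withDensity :
    gaussianReal 0 1 = volume.withDensity fun z ↦ ENNReal.ofReal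
      ((√(2 * Real.pi))⁻¹ * exp (-z ^ 2 / 2)) := by
  rw [gaussianReal_of_var_ne_zero _ one_ne_zero]
  simp [gaussianPDF_def, gaussianPDFReal_def]

lemma exists_pos_rates {b θ δ : ℝ} (hb : b ≠ 0) (hδ : δ = θ + √(θ ^ 2 + b ^ 2)) :
    0 < δ ∧ ∃ ε > 0, θ = (δ - ε) / 2 ∧ b ^ 2 = δ * ε := by
  have h_lt : |θ| < √(θ ^ 2 + b ^ 2) :=
    lt_sqrt_of_sq_lt (by rw [sq_abs]; exact lt_add_of_pos_right _ (by positivity))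
  obtain ⟨h_neg, h_pos⟩ := abs_lt.1 h_lt
  have h_sq := sq_sqrt (show 0 ≤ θ ^ 2 + b ^ 2 by positivity)
  refine ⟨by linarith, √(θ ^ 2 + b ^ 2) - θ, by linarith, by rw [hδ]; ring, ?_⟩
  rw [hδ]
  linear_combination -h_sq

lemma inv_mul_rpow_mul_exp_eq_gammaPDFReal {p b ε δ y : ℝ} (hb : 0 ≤ b) (hε : 0 < ε) (hδ : 0 < δ)
    (hy : 0 ≤ y) (hbδε : b ^ 2 = δ * ε) :
    (2 ^ p * b ^ (-(2 * p)) * Gamma p * (((δ - ε) / 2) ^ 2 + b ^ 2) ^ (p / 2) * δ)⁻¹ *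
        y ^ (p - 1) * exp (-δ * y) =
      gammaPDFReal p δ y / δ * (ε / (ε + δ)) ^ p := by
  have h_b : b ^ (-(2 * p)) = (δ ^ p * ε ^ p)⁻¹ := by
    rw [rpow_neg hb, rpow_mul hb, rpow_two, hbδε, mul_rpow hδ.le hε.le]
  have h_sq : (((δ - ε) / 2) ^ 2 + b ^ 2) ^ (p / 2) = ((ε + δ) / 2) ^ p := by
    rw [hbδε, show ((δ - ε) / 2) ^ 2 + δ * ε = ((ε + δ) / 2) ^ 2 by ring, ← rpow_two,
      ← rpow_mul (by positivity), mul_div_cancel₀ p two_ne_zero]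
  rw [h_b, h_sq, div_rpow (by positivity) zero_le_two, div_rpow hε.le (by positivity), gammaPDFReal,
    if_pos hy]
  field_simp

lemma abs_div_mul_sub_one_le {F g c B : ℝ} (hg : 0 < g) (hc : 0 < c)
    (h : |F - g * c| ≤ g * B) : |F / (g * c) - 1| ≤ B / c := by
  rw [div_sub_one (by positivity), abs_div, abs_of_pos (mul_pos hg hc),
    ← mul_div_mul_left B c hg.ne']
  gcongr

end

/-- Lower-tail asymptotic of the marginal of the equi-skew GH model with a = 0
(variance-mean mixture of a standard normal by a Gamma(p, b²/2) mixing variable):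
with X₁ = θW + √W·Z₁ and δ = θ + √(θ²+b²),
P(X₁ ≤ x) = A|x|^{p−1}e^{−δ|x|}(1 + O(1/|x|)) as x → −∞, where
A = [2^p b^{−2p} Γ(p) (θ²+b²)^{p/2} δ]^{−1}. -/
theorem stmt_13 (p b θ : ℝ) (hp : 0 < p) (hb : 0 < b)
    {Ω : Type*} [MeasurableSpace Ω] (P : Measure Ω) [IsProbabilityMeasure P]
    (W Z₁ : Ω → ℝ) (hW : Measurable W) (hZ₁ : Measurable Z₁)
    (hWlaw : Measure.map W P =
      volume.withDensity fun w : ℝ => ENNReal.ofReal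
        (if 0 < w then
          (b ^ 2 / 2) ^ p * w ^ (p - 1) * Real.exp (-(b ^ 2 / 2) * w) / Real.Gamma p
        else 0))
    (hZlaw : Measure.map Z₁ P =
      volume.withDensity fun z : ℝ => ENNReal.ofReal
        ((Real.sqrt (2 * Real.pi))⁻¹ * Real.exp (-z ^ 2 / 2)))
    (hindep : ProbabilityTheory.IndepFun W Z₁ P)
    (X₁ : Ω → ℝ) (hX₁ : ∀ ω, X₁ ω = θ * W ω + Real.sqrt (W ω) * Z₁ ω)
    (δ A : ℝ) (hδ : δ = θ + Real.sqrt (θ ^ 2 + b ^ 2))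
    (hA : A = ((2 : ℝ) ^ p * b ^ (-(2 * p)) * Real.Gamma p *
      (θ ^ 2 + b ^ 2) ^ (p / 2) * δ)⁻¹) :
    ∃ M > (0 : ℝ), ∃ x₀ < (0 : ℝ), ∀ x ≤ x₀,
      |(P {ω | X₁ ω ≤ x}).toReal / (A * |x| ^ (p - 1) * Real.exp (-δ * |x|)) - 1|
        ≤ M / |x| := by
  obtain ⟨hδ₀, ε, hε, rfl, hb_sq⟩ := exists_pos_rates hb.ne' hδ
  rw [← gammaMeasure_eq_withDensity_ite_pos, hb_sq] at hWlaw
  rw [← gaussianReal_zero_one_eq_withDensity] at hZlaw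
  have h_ratio : 0 < (ε / (ε + δ)) ^ p := by positivity
  refine ⟨8 * |p - 1| / δ / (ε / (ε + δ)) ^ p + 1, by positivity, -(4 * |p - 1| / δ + 1),
    neg_lt_zero.2 (by positivity), fun x hx ↦ ?_⟩
  obtain ⟨y, rfl⟩ : ∃ y, x = -y := ⟨-x, (neg_neg x).symm⟩
  have hδy : 4 * |p - 1| / δ + 1 ≤ y := neg_le_neg_iff.1 hx
  have hy : 0 < y := lt_of_lt_of_le (by positivity) hδy
  have h_tail := abs_measureReal_map_meanVarianceMixture_gammaMeasure_Iic_sub_le hp hε hδ₀ hy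
    ((div_le_iff₀' hδ₀).1 (by linarith))
  rw [← hWlaw, ← hZlaw,
    ← measureReal_setOf_le_eq_map_prod_real_Iic hW hZ₁ hindep (by fun_prop)] at h_tail
  simp only [← hX₁, measureReal_def] at h_tail
  rw [abs_neg, abs_of_pos hy, hA, inv_mul_rpow_mul_exp_eq_gammaPDFReal hb.le hε hδ₀ hy.le hb_sq]
  have hf := div_pos (ProbabilityTheory.gammaPDFReal_pos hp hδ₀ hy) hδ₀
  refine (abs_div_mul_sub_one_le hf h_ratio h_tail).trans ?_
  rw [div_right_comm]
  gcongr
  exact le_add_of_nonneg_right zero_le_one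
end

section
/- Let F : ℝ → [0, 1] be a continuous, strictly increasing distribution function, and suppose there exist constants A > 0, c > 0, p ∈ ℝ such that F(x) = A·|x|^{p−1}·e^{−c|x|}·(1 + O(1/|x|)) as x → −∞. Then the quantile function satisfies F^{−1}(u) = (log u)/c − ((p−1)/c)·log|log u| + (1/c)·log(c^{p−1}/A) + O(log|log u|/|log u|) as u → 0⁺; that is, there exist M > 0 and u₀ ∈ (0,1) such that for all 0 < u ≤ u₀, |F^{−1}(u) − (log u)/c + ((p−1)/c)log|log u| − (1/c)log(c^{p−1}/A)| ≤ M·log|log u|/|log u|. -/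
open MeasureTheory Real Set Filter

/-! Write `y = |x|` and `L = -log u`. Taking logarithms in the tail formula gives
`L = c y - q log y - log A + O(1 / y)` with `q = p - 1`. Hence `L ~ c y`, and feeding this crude
approximation back into the logarithm gives `log L = log (c y) + O(log y / y)`; replacing `log y`
by `log L - log c` in the first relation and solving for `y` is the asserted expansion. -/

section AsymptoticInversion

open Asymptotics Topology

variable {α : Type*} {l : Filter α}

lemma isBigO_log_nhds_one : Real.log =O[𝓝 1] fun r => r - 1 := by
  simpa only [Real.log_one, sub_zero] using (Real.hasDerivAt_log one_ne_zero).isBigO_sub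

lemma isBigO_log_sub_log {f g : α → ℝ} (hfg : f ~[l] g) (hg : ∀ᶠ t in l, g t ≠ 0) :
    (fun t => Real.log (f t) - Real.log (g t)) =O[l] fun t => (f t - g t) / g t := by
  have hratio : Tendsto (fun t => f t / g t) l (𝓝 1) :=
    (isEquivalent_iff_tendsto_one hg).mp hfg
  refine (isBigO_log_nhds_one.comp_tendsto hratio).congr' ?_ ?_
  · filter_upwards [hg, hratio.eventually_ne one_ne_zero] with t hgt hne
    exact Real.log_div (div_ne_zero_iff.mp hne).1 hgt
  · filter_upwards [hg] with t hgt
    exact div_sub_one hgt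

lemma isBigO_const_log_comp {y : α → ℝ} (hy : Tendsto y l atTop) (a : ℝ) :
    (fun _ => a) =O[l] fun t => Real.log (y t) :=
  (Real.isLittleO_const_log_atTop.comp_tendsto hy).isBigO

lemma isTheta_log_div_self_of_isEquivalent_const_mul {c : ℝ} {f g : α → ℝ} (hc : 0 < c)
    (hfg : f ~[l] fun t => c * g t) (hg : Tendsto g l atTop) :
    (fun t => Real.log (f t) / f t) =Θ[l] fun t => Real.log (g t) / g t := by
  have hlog_mul : (fun t => Real.log (c * g t)) ~[l] fun t => Real.log (g t) := by
    refine IsEquivalent.congr_left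
      (IsEquivalent.refl.const_add_of_norm_tendsto_atTop (c := Real.log c) ?_) ?_
    · exact tendsto_norm_atTop_atTop.comp (Real.tendsto_log_atTop.comp hg)
    · filter_upwards [hg.eventually_ne_atTop 0] with t ht
      exact (Real.log_mul hc.ne' ht).symm
  exact ((hfg.log (hg.const_mul_atTop hc)).trans hlog_mul).isTheta.div
    (hfg.isTheta.trans ((isTheta_const_mul_left hc.ne').mpr isTheta_rfl))

section LogCorrection

variable {c q a : ℝ} {y L : α → ℝ}

lemma isBigO_sub_mul_of_log_correction (hy : Tendsto y l atTop)
    (hL : (fun t => L t - (c * y t - q * Real.log (y t) - a)) =O[l]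
      fun t => Real.log (y t) / y t) :
    (fun t => L t - c * y t) =O[l] fun t => Real.log (y t) := by
  have herror : (fun t => Real.log (y t) / y t) =O[l] fun t => Real.log (y t) := by
    simpa only [div_eq_mul_inv, mul_one, Pi.inv_apply] using
      (isBigO_refl (fun t => Real.log (y t)) l).mul (hy.inv_tendsto_atTop.isBigO_one ℝ)
  refine (((hL.trans herror).sub (isBigO_const_mul_self q _ l)).sub
    (isBigO_const_log_comp hy a)).congr_left fun t => ?_
  ring

lemma isEquivalent_mul_of_log_correction (hc : c ≠ 0) (hy : Tendsto y l atTop)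
    (hL : (fun t => L t - (c * y t - q * Real.log (y t) - a)) =O[l]
      fun t => Real.log (y t) / y t) :
    L ~[l] fun t => c * y t :=
  (isBigO_sub_mul_of_log_correction hy hL).trans_isLittleO
    ((Real.isLittleO_log_id_atTop.comp_tendsto hy).const_mul_right hc)

theorem isBigO_inversion_of_log_correction (hc : 0 < c) (hy : Tendsto y l atTop)
    (hL : (fun t => L t - (c * y t - q * Real.log (y t) - a)) =O[l]
      fun t => Real.log (y t) / y t) :
    (fun t => y t - (L t / c + q / c * Real.log (L t) + (a - q * Real.log c) / c)) =O[l]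
      fun t => Real.log (L t) / L t := by
  have hequiv := isEquivalent_mul_of_log_correction hc.ne' hy hL
  have hy_ne := hy.eventually_ne_atTop 0
  have hlog : (fun t => Real.log (L t) - Real.log (c * y t)) =O[l]
      fun t => Real.log (y t) / y t := by
    have hcy_ne : ∀ᶠ t in l, c * y t ≠ 0 := hy_ne.mono fun t ht => mul_ne_zero hc.ne' ht
    exact (isBigO_log_sub_log hequiv hcy_ne).trans <|
      (isBigO_sub_mul_of_log_correction hy hL).mul
        ((isTheta_const_mul_left hc.ne').mpr isTheta_rfl).inv.isBigO
  have herror := ((hL.add (hlog.const_mul_left q)).const_mul_left (-c⁻¹)).trans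
    (isTheta_log_div_self_of_isEquivalent_const_mul hc hequiv hy).symm.isBigO
  refine herror.congr' ?_ EventuallyEq.rfl
  filter_upwards [hy_ne] with t ht
  rw [Real.log_mul hc.ne' ht]
  field_simp
  ring

end LogCorrection

section GammaTail

/-- The generalized gamma-type tail `A y ^ q e ^ (-c y)`, with `q` in the role of `p - 1` and `y`
in the role of `|x|`. -/
noncomputable def gammaTail (A c q y : ℝ) : ℝ := A * y ^ q * Real.exp (-c * y)

variable {A c q : ℝ}

lemma gammaTail_pos {y : ℝ} (hA : 0 < A) (hy : 0 < y) : 0 < gammaTail A c q y := by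
  unfold gammaTail
  positivity

lemma log_gammaTail {y : ℝ} (hA : A ≠ 0) (hy : 0 < y) :
    Real.log (gammaTail A c q y) = Real.log A + q * Real.log y - c * y := by
  have hyq : y ^ q ≠ 0 := (Real.rpow_pos_of_pos hy q).ne'
  rw [gammaTail, Real.log_mul (mul_ne_zero hA hyq) (Real.exp_ne_zero _), Real.log_mul hA hyq,
    Real.log_rpow hy, Real.log_exp]
  ring

variable {u y : α → ℝ}

lemma isEquivalent_gammaTail (hy : Tendsto y l atTop)
    (hu : (fun t => u t / gammaTail A c q (y t) - 1) =O[l] fun t => (y t)⁻¹) :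
    u ~[l] fun t => gammaTail A c q (y t) := by
  refine isEquivalent_of_tendsto_one ?_
  simpa only [sub_add_cancel, zero_add, Pi.div_def] using
    (hu.trans_tendsto hy.inv_tendsto_atTop).add_const 1

lemma isBigO_neg_log_sub_of_gammaTail (hA : 0 < A) (hy : Tendsto y l atTop)
    (hu : (fun t => u t / gammaTail A c q (y t) - 1) =O[l] fun t => (y t)⁻¹) :
    (fun t => -Real.log (u t) - (c * y t - q * Real.log (y t) - Real.log A)) =O[l]
      fun t => Real.log (y t) / y t := by
  have hy_pos := hy.eventually_gt_atTop 0
  have htail_ne : ∀ᶠ t in l, gammaTail A c q (y t) ≠ 0 :=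
    hy_pos.mono fun t ht => (gammaTail_pos hA ht).ne'
  have hlog : (fun t => Real.log (u t) - Real.log (gammaTail A c q (y t))) =O[l]
      fun t => (y t)⁻¹ := by
    refine (isBigO_log_sub_log (isEquivalent_gammaTail hy hu) htail_ne).trans
      (hu.congr' ?_ EventuallyEq.rfl)
    exact htail_ne.mono fun t ht => div_sub_one ht
  have hinv : (fun t => (y t)⁻¹) =O[l] fun t => Real.log (y t) / y t := by
    simpa only [div_eq_mul_inv, one_mul] using
      (isBigO_const_log_comp hy 1).mul (isBigO_refl (fun t => (y t)⁻¹) l)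
  refine (hlog.neg_left.trans hinv).congr' ?_ EventuallyEq.rfl
  filter_upwards [hy_pos] with t ht
  rw [log_gammaTail hA.ne' ht]
  ring

lemma tendsto_neg_log_atTop_of_gammaTail (hA : 0 < A) (hc : 0 < c) (hy : Tendsto y l atTop)
    (hu : (fun t => u t / gammaTail A c q (y t) - 1) =O[l] fun t => (y t)⁻¹) :
    Tendsto (fun t => -Real.log (u t)) l atTop :=
  (isEquivalent_mul_of_log_correction hc.ne' hy
    (isBigO_neg_log_sub_of_gammaTail hA hy hu)).symm.tendsto_atTop (hy.const_mul_atTop hc)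

theorem isBigO_inversion_of_gammaTail (hA : 0 < A) (hc : 0 < c) (hy : Tendsto y l atTop)
    (hu : (fun t => u t / gammaTail A c q (y t) - 1) =O[l] fun t => (y t)⁻¹) :
    (fun t => -y t - Real.log (u t) / c + q / c * Real.log |Real.log (u t)| -
        (1 / c) * Real.log (c ^ q / A)) =O[l]
      fun t => Real.log |Real.log (u t)| / |Real.log (u t)| := by
  have hinv := isBigO_inversion_of_log_correction hc hy (isBigO_neg_log_sub_of_gammaTail hA hy hu)
  refine hinv.neg_left.congr' ?_ ?_
  · filter_upwards with t
    rw [Real.log_neg_eq_log, Real.log_abs, Real.log_div (Real.rpow_pos_of_pos hc q).ne' hA.ne',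
      Real.log_rpow hc]
    ring
  · filter_upwards [(tendsto_neg_log_atTop_of_gammaTail hA hc hy hu).eventually_gt_atTop 0]
      with t ht
    rw [abs_of_neg (neg_pos.mp ht)]

end GammaTail

lemma exists_forall_of_le_of_eventually_atBot {β : Type*} [LinearOrder β] [Nonempty β]
    {F : β → ℝ} {P : β → Prop} (hF : Monotone F) (hpos : ∀ᶠ x in atBot, 0 < F x)
    (hP : ∀ᶠ x in atBot, P x) :
    ∃ u₀ ∈ Ioo (0 : ℝ) 1, ∀ x, F x ≤ u₀ → P x := by
  obtain ⟨b, hPb, hFb⟩ := ((eventually_forall_le_atBot.mpr hP).and hpos).exists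
  obtain ⟨u₀, hu₀, hu₀_lt⟩ := exists_between (lt_min hFb one_pos)
  obtain ⟨hu₀_lt_F, hu₀_lt_one⟩ := lt_min_iff.mp hu₀_lt
  exact ⟨u₀, ⟨hu₀, hu₀_lt_one⟩, fun x hx => hPb x (hF.reflect_lt (hx.trans_lt hu₀_lt_F)).le⟩

theorem stmt_15_general (F : ℝ → ℝ) (hmono : Monotone F) (A c p : ℝ) (hA : 0 < A) (hc : 0 < c)
    (htail : ∃ M > (0 : ℝ), ∃ x₀ < (0 : ℝ), ∀ x ≤ x₀,
      |F x / (A * |x| ^ (p - 1) * Real.exp (-c * |x|)) - 1| ≤ M / |x|) :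
    ∃ M > (0 : ℝ), ∃ u₀ ∈ Ioo (0 : ℝ) 1, ∀ u, 0 < u → u ≤ u₀ →
      ∀ x, F x = u →
        |x - Real.log u / c + (p - 1) / c * Real.log |Real.log u| -
            (1 / c) * Real.log (c ^ (p - 1) / A)|
          ≤ M * Real.log |Real.log u| / |Real.log u| := by
  obtain ⟨M, -, x₀, -, hbound⟩ := htail
  have habs : Tendsto (fun x : ℝ => |x|) atBot atTop := tendsto_abs_atBot_atTop
  have htailO : (fun x => F x / gammaTail A c (p - 1) |x| - 1) =O[atBot] fun x => |x|⁻¹ := by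
    refine IsBigO.of_bound M ((eventually_le_atBot x₀).mono fun x hx => ?_)
    rw [Real.norm_of_nonneg (inv_nonneg.mpr (abs_nonneg x)), ← div_eq_mul_inv]
    exact hbound x hx
  have hFpos : ∀ᶠ x in atBot, 0 < F x :=
    (isEquivalent_gammaTail habs htailO).eventually_pos
      ((habs.eventually_gt_atTop 0).mono fun x hx => gammaTail_pos hA hx)
  obtain ⟨C, hC, hinversion⟩ := (isBigO_inversion_of_gammaTail hA hc habs htailO).exists_pos
  have hlog := (tendsto_neg_log_atTop_of_gammaTail hA hc habs htailO).eventually_ge_atTop 1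
  obtain ⟨u₀, hu₀, hexpansion⟩ := exists_forall_of_le_of_eventually_atBot hmono hFpos
    (hinversion.bound.and (hlog.and (eventually_le_atBot 0)))
  refine ⟨C, hC, u₀, hu₀, ?_⟩
  rintro _ - hu x rfl
  obtain ⟨hx, hlogx, hx_nonpos⟩ := hexpansion x hu
  have hlog_abs : 1 ≤ |Real.log (F x)| := hlogx.trans (neg_le_abs _)
  rwa [abs_of_nonpos hx_nonpos, neg_neg, Real.norm_eq_abs, Real.norm_of_nonneg
    (div_nonneg (Real.log_nonneg hlog_abs) (abs_nonneg _)), ← mul_div_assoc] at hx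

end AsymptoticInversion

/-- Asymptotic inversion of a distribution function with generalized gamma-type lower
tail F(x) = A|x|^{p−1}e^{−c|x|}(1 + O(1/|x|)) as x → −∞: the quantile function satisfies
F^{−1}(u) = (log u)/c − ((p−1)/c)log|log u| + (1/c)log(c^{p−1}/A) + O(log|log u|/|log u|)
as u → 0⁺, where F^{−1}(u) is the unique x with F(x) = u. -/
theorem stmt_15 (F : ℝ → ℝ) (hcont : Continuous F) (hmono : StrictMono F)
    (hrange : ∀ x, F x ∈ Icc (0 : ℝ) 1)
    (hbot : Tendsto F atBot (nhds 0)) (htop : Tendsto F atTop (nhds 1))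
    (A c p : ℝ) (hA : 0 < A) (hc : 0 < c)
    (htail : ∃ M > (0 : ℝ), ∃ x₀ < (0 : ℝ), ∀ x ≤ x₀,
      |F x / (A * |x| ^ (p - 1) * Real.exp (-c * |x|)) - 1| ≤ M / |x|) :
    ∃ M > (0 : ℝ), ∃ u₀ ∈ Ioo (0 : ℝ) 1, ∀ u, 0 < u → u ≤ u₀ →
      ∀ x, F x = u →
        |x - Real.log u / c + (p - 1) / c * Real.log |Real.log u| -
            (1 / c) * Real.log (c ^ (p - 1) / A)|
          ≤ M * Real.log |Real.log u| / |Real.log u| :=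
  stmt_15_general F hmono.monotone A c p hA hc htail
end

section
/- Let G : ℝ → ℝ and h : (0, 1) → ℝ, and suppose: (i) there exist C₃ > 0, γ₀ > 0, q ∈ ℝ such that G(y) = C₃·|y|^q·e^{−γ₀|y|}·(1 + o(1)) as y → −∞; (ii) there exist c > 0, k ∈ ℝ, m ∈ ℝ such that h(u) = (log u)/c − (k/c)·log|log u| + m + O(log|log u|/|log u|) as u → 0⁺ (so h(u) → −∞). Then lim_{u→0⁺} G(h(u)) / (u^{γ₀/c}·|log u|^{q − kγ₀/c}) = C₃·e^{γ₀·m}·c^{−q}. -/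
open MeasureTheory Real Set Filter

open Asymptotics Topology

/-!
Put `L = |log u|`, so that `u ^ (γ / c) = exp (-(γ / c) L)` and
`h = -L / c - (k / c) log L + m + o(1)`. The polynomial factor `|h| ^ q` only sees the leading term
`-L / c` and contributes `(L / c) ^ q`, whereas the exponential factor `exp (γ h)` sees every term
up to `o(1)`: the three terms of the expansion contribute `exp (-(γ / c) L)`, `L ^ (-k γ / c)` and
the constant `exp (γ m)`.
-/

section LogExpansion

variable {α : Type*} {l : Filter α} {L h r : α → ℝ} {a κ m : ℝ}

theorem tendsto_log_div_self_atTop : Tendsto (fun x : ℝ => log x / x) atTop (𝓝 0) :=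
  isLittleO_log_id_atTop.tendsto_div_nhds_zero

theorem tendsto_zero_of_abs_le_mul_log_div {M : ℝ} (hL : Tendsto L l atTop)
    (hr : ∀ᶠ x in l, |r x| ≤ M * log (L x) / L x) : Tendsto r l (𝓝 0) := by
  have hbound : Tendsto (fun x => M * log (L x) / L x) l (𝓝 0) := by
    simpa only [Function.comp_def, mul_div_assoc, mul_zero] using
      (tendsto_log_div_self_atTop.comp hL).const_mul M
  exact squeeze_zero_norm' hr hbound

theorem tendsto_div_of_log_expansion (hL : Tendsto L l atTop)
    (hh : Tendsto (fun x => h x + a * L x + κ * log (L x)) l (𝓝 m)) :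
    Tendsto (fun x => h x / L x) l (𝓝 (-a)) := by
  have hlog := (tendsto_log_div_self_atTop.comp hL).const_mul κ
  have hlim := ((hh.div_atTop hL).sub hlog).sub_const a
  rw [mul_zero, sub_zero, zero_sub] at hlim
  refine hlim.congr' ?_
  filter_upwards [hL.eventually_ne_atTop 0] with x hx
  simp only [Function.comp_apply]
  field_simp
  ring

theorem tendsto_atBot_of_log_expansion (ha : 0 < a) (hL : Tendsto L l atTop)
    (hh : Tendsto (fun x => h x + a * L x + κ * log (L x)) l (𝓝 m)) : Tendsto h l atBot := by
  refine ((tendsto_div_of_log_expansion hL hh).neg_mul_atTop (neg_neg_of_pos ha) hL).congr' ?_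
  filter_upwards [hL.eventually_ne_atTop 0] with x hx using div_mul_cancel₀ (h x) hx

theorem tendsto_abs_rpow_div_of_log_expansion (ha : 0 < a) (hL : Tendsto L l atTop)
    (hh : Tendsto (fun x => h x + a * L x + κ * log (L x)) l (𝓝 m)) (q : ℝ) :
    Tendsto (fun x => |h x| ^ q / L x ^ q) l (𝓝 (a ^ q)) := by
  have habs : Tendsto (fun x => |h x / L x|) l (𝓝 a) := by
    simpa only [abs_neg, abs_of_pos ha] using (tendsto_div_of_log_expansion hL hh).abs
  refine (habs.rpow_const (Or.inl ha.ne')).congr' ?_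
  filter_upwards [hL.eventually_gt_atTop 0] with x hx
  rw [abs_div, abs_of_pos hx, div_rpow (abs_nonneg _) hx.le]

theorem tendsto_exp_mul_div_of_log_expansion (hL : Tendsto L l atTop)
    (hh : Tendsto (fun x => h x + a * L x + κ * log (L x)) l (𝓝 m)) (γ : ℝ) :
    Tendsto (fun x => exp (γ * h x) / (exp (-(γ * a * L x)) * L x ^ (-(γ * κ)))) l
      (𝓝 (exp (γ * m))) := by
  refine ((continuous_exp.tendsto _).comp (hh.const_mul γ)).congr' ?_
  filter_upwards [hL.eventually_gt_atTop 0] with x hx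
  rw [Function.comp_apply, rpow_def_of_pos hx, ← exp_add, ← exp_sub]
  congr 1
  ring

theorem tendsto_rpow_mul_exp_div_of_log_expansion (ha : 0 < a) (hL : Tendsto L l atTop)
    (hh : Tendsto (fun x => h x + a * L x + κ * log (L x)) l (𝓝 m)) (C q γ : ℝ) :
    Tendsto (fun x => C * |h x| ^ q * exp (-γ * |h x|) /
      (exp (-(γ * a * L x)) * L x ^ (q - γ * κ))) l (𝓝 (C * exp (γ * m) * a ^ q)) := by
  refine (((tendsto_exp_mul_div_of_log_expansion hL hh γ).const_mul C).mul
    (tendsto_abs_rpow_div_of_log_expansion ha hL hh q)).congr' ?_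
  filter_upwards [hL.eventually_gt_atTop 0,
    (tendsto_atBot_of_log_expansion ha hL hh).eventually_lt_atBot 0] with x hLx hhx
  rw [abs_of_neg hhx, neg_mul_neg, sub_eq_add_neg q, rpow_add hLx]
  ring

theorem tendsto_comp_div_of_log_expansion {G : ℝ → ℝ} {C q γ : ℝ}
    (hG : Tendsto (fun y => G y / (C * |y| ^ q * exp (-γ * |y|))) atBot (𝓝 1))
    (ha : 0 < a) (hL : Tendsto L l atTop)
    (hh : Tendsto (fun x => h x + a * L x + κ * log (L x)) l (𝓝 m)) :
    Tendsto (fun x => G (h x) / (exp (-(γ * a * L x)) * L x ^ (q - γ * κ))) l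
      (𝓝 (C * exp (γ * m) * a ^ q)) := by
  have hequiv : (fun x => G (h x)) ~[l] fun x => C * |h x| ^ q * exp (-γ * |h x|) :=
    (isEquivalent_of_tendsto_one hG).comp_tendsto (tendsto_atBot_of_log_expansion ha hL hh)
  exact (hequiv.div IsEquivalent.refl).symm.tendsto_nhds
    (tendsto_rpow_mul_exp_div_of_log_expansion ha hL hh C q γ)

end LogExpansion

theorem tendsto_abs_log_nhdsGT_zero : Tendsto (fun u => |log u|) (𝓝[>] 0) atTop :=
  tendsto_abs_atBot_atTop.comp tendsto_log_nhdsGT_zero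

theorem rpow_eq_exp_neg_mul_abs_log {u : ℝ} (hu : 0 < u) (hu₁ : u ≤ 1) (s : ℝ) :
    u ^ s = exp (-(s * |log u|)) := by
  rw [rpow_def_of_pos hu, abs_of_nonpos (log_nonpos hu.le hu₁), mul_neg, neg_neg, mul_comm]

theorem stmt_16_general {G h : ℝ → ℝ} {C γ q c k m : ℝ}
    (hG : Tendsto (fun y => G y / (C * |y| ^ q * exp (-γ * |y|))) atBot (𝓝 1)) (hc : 0 < c)
    (hh : Tendsto (fun u => h u - (log u / c - k / c * log |log u| + m)) (𝓝[>] 0) (𝓝 0)) :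
    Tendsto (fun u => G (h u) / (u ^ (γ / c) * |log u| ^ (q - k * γ / c))) (𝓝[>] 0)
      (𝓝 (C * exp (γ * m) * c ^ (-q))) := by
  have hu_mem : ∀ᶠ u : ℝ in 𝓝[>] 0, u ∈ Ioc 0 1 := Ioc_mem_nhdsGT one_pos
  have hexpansion :
      Tendsto (fun u => h u + c⁻¹ * |log u| + k / c * log |log u|) (𝓝[>] 0) (𝓝 m) := by
    rw [← zero_add m]
    refine (hh.add_const m).congr' ?_
    filter_upwards [hu_mem] with u hu
    rw [abs_of_nonpos (log_nonpos hu.1.le hu.2)]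
    ring
  rw [rpow_neg hc.le, ← inv_rpow hc.le]
  refine (tendsto_comp_div_of_log_expansion hG (inv_pos.mpr hc) tendsto_abs_log_nhdsGT_zero
    hexpansion).congr' ?_
  filter_upwards [hu_mem] with u hu
  rw [rpow_eq_exp_neg_mul_abs_log hu.1 hu.2, div_eq_mul_inv γ c, mul_div_left_comm, mul_div_assoc]

/-- Composition step: substituting an expansion
h(u) = (log u)/c − (k/c)log|log u| + m + O(log|log u|/|log u|)  (u → 0⁺)
into a lower-tail asymptotic G(y) = C₃|y|^q e^{−γ₀|y|}(1 + o(1)) (y → −∞) gives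
G(h(u)) / (u^{γ₀/c}·|log u|^{q − kγ₀/c}) → C₃·e^{γ₀m}·c^{−q} as u → 0⁺. -/
theorem stmt_16 (G : ℝ → ℝ) (h : ℝ → ℝ)
    (C₃ γ₀ q : ℝ) (hC₃ : 0 < C₃) (hγ₀ : 0 < γ₀)
    (hG : Tendsto (fun y => G y / (C₃ * |y| ^ q * Real.exp (-γ₀ * |y|))) atBot (nhds 1))
    (c k m : ℝ) (hc : 0 < c)
    (hh : ∃ M > (0 : ℝ), ∃ u₀ ∈ Ioo (0 : ℝ) 1, ∀ u, 0 < u → u ≤ u₀ →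
      |h u - (Real.log u / c - k / c * Real.log |Real.log u| + m)|
        ≤ M * Real.log |Real.log u| / |Real.log u|) :
    Tendsto
      (fun u => G (h u) / (u ^ (γ₀ / c) * |Real.log u| ^ (q - k * γ₀ / c)))
      (nhdsWithin 0 (Ioi 0)) (nhds (C₃ * Real.exp (γ₀ * m) * c ^ (-q))) := by
  obtain ⟨M, -, u₀, ⟨hu₀, -⟩, hbound⟩ := hh
  refine stmt_16_general hG hc
    (tendsto_zero_of_abs_le_mul_log_div (M := M) tendsto_abs_log_nhdsGT_zero ?_)
  filter_upwards [Ioc_mem_nhdsGT hu₀] with u hu using hbound u hu.1 hu.2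
end

section
/- Let θ ∈ ℝ, α > 0, b > 0, and set β = √(θ²(1+α²)+b²), γ = β + θ·√(1+α²), δ = θ + √(θ²+b²), and τ = √(1+α²)·γ/δ. Then δ > 0, γ > 0, and τ > 1. -/
/-!
Both `δ` and `γ` are values of `f x = x + √(x ^ 2 + b ^ 2)`: writing `s = √(1 + α ^ 2)`, one has
`δ = f θ` and `γ = f (s * θ)`, so `1 < τ` says `f θ < s * f (s * θ)`. Since `1 < s`,
scaling gives `f (s * x) < s * f x`, and the identity `f x * f (-x) = b ^ 2` turns this bound at
`x = -θ` into the required one at `θ`, whatever the sign of `θ`.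
-/

/-- The number `x + √(x ^ 2 + c)`, which for `0 < c` is the positive root `t` of
`t ^ 2 = 2 * x * t + c`. With `c = b ^ 2` it expresses both `δ` and `γ`. -/
noncomputable def positiveRoot (c x : ℝ) : ℝ := x + √(x ^ 2 + c)

section PositiveRoot

variable {c s : ℝ}

lemma positiveRoot_pos (hc : 0 < c) (x : ℝ) : 0 < positiveRoot c x := by
  have neg_lt_sqrt : -x < √(x ^ 2 + c) := Real.lt_sqrt_of_sq_lt (by rw [neg_sq]; linarith)
  exact neg_lt_iff_pos_add'.mp neg_lt_sqrt

lemma positiveRoot_mul_positiveRoot_neg (hc : 0 ≤ c) (x : ℝ) :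
    positiveRoot c x * positiveRoot c (-x) = c := by
  have sq_sqrt : √(x ^ 2 + c) ^ 2 = x ^ 2 + c := Real.sq_sqrt (by positivity)
  rw [positiveRoot, positiveRoot, neg_sq]
  linear_combination sq_sqrt

lemma positiveRoot_mul_lt_mul_positiveRoot (hs : 1 < s) (hc : 0 < c) (x : ℝ) :
    positiveRoot c (s * x) < s * positiveRoot c x := by
  have c_lt : c < s ^ 2 * c := lt_mul_of_one_lt_left hc (one_lt_pow₀ hs two_ne_zero)
  have sqrt_lt : √((s * x) ^ 2 + c) < s * √(x ^ 2 + c) := by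
    calc √((s * x) ^ 2 + c) < √(s ^ 2 * (x ^ 2 + c)) :=
          Real.sqrt_lt_sqrt (by positivity) (by linarith)
      _ = s * √(x ^ 2 + c) := by
          rw [Real.sqrt_mul (sq_nonneg s), Real.sqrt_sq (by positivity)]
  rw [positiveRoot, positiveRoot, mul_add]
  gcongr

lemma positiveRoot_lt_mul_positiveRoot_mul (hs : 1 < s) (hc : 0 < c) (x : ℝ) :
    positiveRoot c x < s * positiveRoot c (s * x) := by
  refine lt_of_mul_lt_mul_right ?_ (positiveRoot_pos hc (-(s * x))).le
  calc positiveRoot c x * positiveRoot c (-(s * x))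
      < positiveRoot c x * (s * positiveRoot c (-x)) := by
        rw [← mul_neg]
        exact mul_lt_mul_of_pos_left (positiveRoot_mul_lt_mul_positiveRoot hs hc (-x))
          (positiveRoot_pos hc x)
    _ = s * c := by rw [mul_left_comm, positiveRoot_mul_positiveRoot_neg hc.le]
    _ = s * positiveRoot c (s * x) * positiveRoot c (-(s * x)) := by
        rw [mul_assoc, positiveRoot_mul_positiveRoot_neg hc.le]

end PositiveRoot

/-- The tail order τ = √(1+α²)·γ/δ of the equi-skew GH copula, where
β = √(θ²(1+α²)+b²), γ = β + θ√(1+α²) and δ = θ + √(θ²+b²), satisfies δ > 0, γ > 0 and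
τ > 1. -/
theorem stmt_18 (θ α b : ℝ) (hα : 0 < α) (hb : 0 < b)
    (β γ δ τ : ℝ)
    (hβ : β = Real.sqrt (θ ^ 2 * (1 + α ^ 2) + b ^ 2))
    (hγ : γ = β + θ * Real.sqrt (1 + α ^ 2))
    (hδ : δ = θ + Real.sqrt (θ ^ 2 + b ^ 2))
    (hτ : τ = Real.sqrt (1 + α ^ 2) * γ / δ) :
    0 < δ ∧ 0 < γ ∧ 1 < τ := by
  have c_pos : 0 < b ^ 2 := pow_pos hb 2
  have one_lt_scale : 1 < √(1 + α ^ 2) := Real.lt_sqrt_of_sq_lt (by nlinarith)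
  have δ_eq : δ = positiveRoot (b ^ 2) θ := hδ
  have γ_eq : γ = positiveRoot (b ^ 2) (√(1 + α ^ 2) * θ) := by
    rw [hγ, hβ, positiveRoot, mul_pow, Real.sq_sqrt (by positivity)]
    ring_nf
  have δ_pos : 0 < δ := δ_eq ▸ positiveRoot_pos c_pos θ
  refine ⟨δ_pos, γ_eq ▸ positiveRoot_pos c_pos _, ?_⟩
  rw [hτ, one_lt_div δ_pos, γ_eq, δ_eq]
  exact positiveRoot_lt_mul_positiveRoot_mul one_lt_scale c_pos θ
end
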